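/- Let k ≥ 1. For every demonic VASS A and every counter c of A, the termination complexity L of A is either in O(n^k) or in Ω(n^{k+1}), and the counter complexity C[c] of A is either in O(n^k) or in Ω(n^{k+1}). -/

import Mathlib

/-!
In a demonic VASS all choices are made by Demon, who can enforce any run, so both complexities are
maxima over runs; the length of a run is the final value of an additional counter that grows by one
in each step. It therefore suffices to show that the largest value that a counter `c` can attain
from initial values `n` is either in `O(n ^ k)` or in `Ω(n ^ (k + 1))` (`up_or_low`).

Consider first a strongly connected VASS whose counters `x` start with values of order `n ^ a x`.
A chain of transition sets `T 0 ⊇ T 1 ⊇ …` is constructed such that the transitions outside `T j`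
occur only `O(n ^ j)` times, together with an exponent `e x` for each counter (`Layers`). Given
`T 0, …, T j`, let `T (j + 1)` be the maximal support of a circulation on `T j` which, for each
counter `x` with `a x ≤ j + 1`, does not decrease `x` in any connected component of
`T (j + 1 - e x)`. The strengthening of the Farkas lemma due to Tucker (`tucker`) gives a circulation with that
support and a dual solution that is strictly complementary to it:

* the dual solution is a potential, linear in the counters, that does not increase along `T j` and
  strictly decreases outside `T (j + 1)`. Its counter weights are constant on the components of
  `T (j + 1 - e x)`, so they change `O(n ^ (j + 1 - e x))` times, each change costing
  `O(n ^ e x)`. Hence transitions outside `T (j + 1)` occur `O(n ^ (j + 1))` times, and a counter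
  whose weight is positive everywhere stays in `O(n ^ (j + 1))` (`upper_stage`);
* a counter with `a x ≤ j + 1` whose exponent is still open and whose weight is zero is strictly
  increased by the circulation. Nesting Eulerian circuits of the circulations, `n` rounds of
  layer `i + 1` within each round of layer `i`, gives a cycle that raises all such counters to order `n ^ (j + 2)` while its dips never exceed
  what is available (`exists_block`, `exists_pump`).

Running the construction up to layer `k`, a counter with `e x ≤ k` stays in `O(n ^ e x)`, and a
single run raises every counter to `Ω(n ^ e x)` (`lower_scc`). In a general VASS the exponents `e`
at the exits of one strongly connected component serve as the initial exponents `a` of the next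
one, and induction on the number of reachable states finishes the proof.
-/

open scoped Classical

namespace VassPaper

noncomputable section

/-- A `d`-dimensional VASS (game): a finite nonempty set of control states together with a
finite set of transitions, where states are partitioned into angelic and demonic ones
(via the predicate `angelic`; demonic states are those that are not angelic). -/
structure VASS (d : ℕ) where
  Q : Type
  [finQ : Fintype Q]
  [neQ : Nonempty Q]
  Tran : Finset (Q × (Fin d → ℤ) × Q)
  angelic : Q → Prop

attribute [instance] VASS.finQ VASS.neQ

variable {d : ℕ}

/-- Every control state has at least one outgoing transition. -/
def VASS.total (V : VASS d) : Prop := ∀ q : V.Q, ∃ u p, (q, u, p) ∈ V.Tran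

/-- A demonic VASS: all states are demonic. -/
def VASS.demonic (V : VASS d) : Prop := ∀ q : V.Q, ¬ V.angelic q

/-- A configuration: a control state together with a vector of counter values. -/
abbrev VASS.Config (V : VASS d) : Type := V.Q × (Fin d → ℕ)

/-- A transition is enabled in a configuration if it is a transition of the VASS, starts in the
current control state, and does not make any counter negative. -/
def VASS.enabled (V : VASS d) (c : V.Config) (t : V.Q × (Fin d → ℤ) × V.Q) : Prop :=
  t ∈ V.Tran ∧ t.1 = c.1 ∧ ∀ i, 0 ≤ (c.2 i : ℤ) + t.2.1 i

/-- The configuration resulting from taking transition `t` in configuration `c`. -/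
def VASS.applyT (V : VASS d) (c : V.Config) (t : V.Q × (Fin d → ℤ) × V.Q) : V.Config :=
  (t.2.2, fun i => ((c.2 i : ℤ) + t.2.1 i).toNat)

/-- A strategy for the player owning the states in `own`: it assigns to every finite computation
(represented by its strict past `h` and current configuration `c`) an outgoing transition of the
current control state; the chosen transition must be enabled whenever some enabled transition
exists. -/
structure Strategy (V : VASS d) (own : V.Q → Prop) where
  choose : List V.Config → V.Config → V.Q × (Fin d → ℤ) × V.Q
  choose_mem : ∀ h c, own c.1 → (∃ t ∈ V.Tran, t.1 = c.1) →
    choose h c ∈ V.Tran ∧ (choose h c).1 = c.1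
  choose_enabled : ∀ h c, own c.1 → (∃ t, V.enabled c t) → V.enabled c (choose h c)

abbrev AngelStrategy (V : VASS d) := Strategy V V.angelic
abbrev DemonStrategy (V : VASS d) := Strategy V (fun q => ¬ V.angelic q)

/-- The maximal computation determined by the pair of strategies `(σ, π)` and the initial
configuration `init`: `playAux σ π init n` is (the history together with) the `n`-th
configuration of the computation, or `none` if the computation has already ended. -/
def playAux {V : VASS d} (σ : AngelStrategy V) (π : DemonStrategy V) (init : V.Config) :
    ℕ → Option (List V.Config × V.Config)
  | 0 => some ([], init)
  | n+1 => (playAux σ π init n).bind fun hc =>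
      let t := if V.angelic hc.2.1 then σ.choose hc.1 hc.2 else π.choose hc.1 hc.2
      if V.enabled hc.2 t then some (hc.1 ++ [hc.2], V.applyT hc.2 t) else none

/-- `c` is visited by the maximal computation `Comp^{σ,π}(init)`. -/
def visits {V : VASS d} (σ : AngelStrategy V) (π : DemonStrategy V) (init : V.Config)
    (c : V.Config) : Prop := ∃ n h, playAux σ π init n = some (h, c)

/-- The length of the maximal computation `Comp^{σ,π}(init)` (number of configurations),
as an extended natural number. -/
def lenComp {V : VASS d} (σ : AngelStrategy V) (π : DemonStrategy V) (init : V.Config) : ℕ∞ :=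
  ⨆ n ∈ {n : ℕ | (playAux σ π init n).isSome}, ((n : ℕ∞) + 1)

/-- The supremum of the values of counter `i` along the maximal computation
`Comp^{σ,π}(init)`. -/
def maxCounter {V : VASS d} (σ : AngelStrategy V) (π : DemonStrategy V) (init : V.Config)
    (i : Fin d) : ℕ∞ :=
  ⨆ c ∈ {c : V.Config | visits σ π init c}, (c.2 i : ℕ∞)

/-- `Tval(pv) = inf_σ sup_π len(Comp^{σ,π}(pv))`. -/
def Tval (V : VASS d) (init : V.Config) : ℕ∞ :=
  ⨅ σ : AngelStrategy V, ⨆ π : DemonStrategy V, lenComp σ π init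

/-- `Cval[c](pv) = inf_σ sup_π max_c(Comp^{σ,π}(pv))`. -/
def Cval (V : VASS d) (i : Fin d) (init : V.Config) : ℕ∞ :=
  ⨅ σ : AngelStrategy V, ⨆ π : DemonStrategy V, maxCounter σ π init i

/-- Termination complexity: `L(n) = max_{p ∈ Q} Tval(p n⃗)`. -/
def Lcomp (V : VASS d) : ℕ → ℕ∞ := fun n => ⨆ p : V.Q, Tval V (p, fun _ => n)

/-- Counter complexity: `C[c](n) = max_{p ∈ Q} Cval[c](p n⃗)`. -/
def Ccomp (V : VASS d) (i : Fin d) : ℕ → ℕ∞ := fun n => ⨆ p : V.Q, Cval V i (p, fun _ => n)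

/-- `f ∈ O(g)`: `f n ≤ C · g n` for some constant `C` and all sufficiently large `n`. -/
def BigO (f : ℕ → ℕ∞) (g : ℕ → ℕ) : Prop := ∃ C N : ℕ, ∀ n ≥ N, f n ≤ ((C * g n : ℕ) : ℕ∞)

/-- `f ∈ Ω(g)`: `f n ≥ g n / c` (i.e. `g n ≤ c · f n`) for some constant `c > 0` and all
sufficiently large `n`. -/
def BigOmega (f : ℕ → ℕ∞) (g : ℕ → ℕ) : Prop :=
  ∃ c N : ℕ, 0 < c ∧ ∀ n ≥ N, (g n : ℕ∞) ≤ (c : ℕ∞) * f n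

/-- `f ∈ Θ(g) = O(g) ∩ Ω(g)`. -/
def BigTheta (f : ℕ → ℕ∞) (g : ℕ → ℕ) : Prop := BigO f g ∧ BigOmega f g

/-- `f ∈ 2^{Ω(n)}`: `f n ≥ 2^{εn}` for some `ε > 0` (taken of the form `1/c`) and all
sufficiently large `n`. -/
def ExpOmega (f : ℕ → ℕ∞) : Prop :=
  ∃ c N : ℕ, 0 < c ∧ ∀ n ≥ N, ((2 ^ (n / c) : ℕ) : ℕ∞) ≤ f n

/-- `S ∈ 2^{O(n)}`: `S n ≤ 2^{Cn}` for some constant `C` and all sufficiently large `n`. -/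
def ExpO (S : ℕ → ℕ) : Prop := ∃ C N : ℕ, ∀ n ≥ N, S n ≤ 2 ^ (C * n)

/-! ### Strictly complementary solutions of linear systems -/

/-- Tucker's lemma for one distinguished row `i₀` of the system `a`: there are a vector `u` with
`a u ≥ 0` and a nonnegative dependency `y` between the rows such that one of the two is strictly
positive at `i₀`. The proof is by induction on the number of other rows. -/
theorem tucker_aux {ι τ : Type*} [DecidableEq ι] [Fintype τ] (i₀ : ι) (s : Finset ι)
    (hi₀ : i₀ ∉ s) :
    ∀ a : ι → τ → ℚ, ∃ (u : τ → ℚ) (y : ι → ℚ), (∀ i, 0 ≤ y i) ∧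
      (∀ t, ∑ i ∈ insert i₀ s, y i * a i t = 0) ∧
      (∀ i ∈ insert i₀ s, 0 ≤ ∑ t, a i t * u t) ∧ 0 < y i₀ + ∑ t, a i₀ t * u t := by
  induction s using Finset.induction_on with
  | empty =>
    intro a
    by_cases h : ∀ t, a i₀ t = 0
    · exact ⟨0, fun _ => 1, by simp, by simp [h], by simp, by simp⟩
    · refine ⟨a i₀, 0, by simp, by simp, ?_, ?_⟩
      · simpa using Finset.sum_nonneg fun t _ => mul_self_nonneg (a i₀ t)
      · push Not at h
        obtain ⟨t, ht⟩ := h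
        simpa using Finset.sum_pos' (fun t _ => mul_self_nonneg (a i₀ t))
          ⟨t, Finset.mem_univ _, mul_self_pos.2 ht⟩
  | insert j s hj ih =>
    intro a
    rw [Finset.mem_insert, not_or] at hi₀
    obtain ⟨hij, his⟩ := hi₀
    have hjs : j ∉ insert i₀ s := by
      rw [Finset.mem_insert, not_or]; exact ⟨fun h => hij h.symm, hj⟩
    obtain ⟨u, y, hy, h0, hu, hpos⟩ := ih his a
    have hne : ∀ i ∈ insert i₀ s, i ≠ j := fun i hi h => hjs (h ▸ hi)
    rw [Finset.insert_comm]
    rcases le_or_gt 0 (∑ t, a j t * u t) with hc | hc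
    · refine ⟨u, fun i => if i = j then 0 else y i, ?_, ?_, ?_, ?_⟩
      · intro i; dsimp only; split_ifs; exacts [le_rfl, hy i]
      · intro t
        rw [Finset.sum_insert hjs]
        beta_reduce
        rw [if_pos rfl, zero_mul, zero_add]
        refine (Finset.sum_congr rfl fun i hi => ?_).trans (h0 t)
        rw [if_neg (hne i hi)]
      · intro i hi
        rcases Finset.mem_insert.1 hi with rfl | hi
        exacts [hc, hu i hi]
      · simpa [hij] using hpos
    · set c := ∑ t, a j t * u t with hcdef
      set r : ι → ℚ := fun i => -(∑ t, a i t * u t) / c with hr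
      have hr0 : ∀ i ∈ insert i₀ s, 0 ≤ r i := fun i hi =>
        div_nonneg_of_nonpos (by linarith [hu i hi]) hc.le
      obtain ⟨u', y', hy', h0', hu', hpos'⟩ := ih his (fun i t => a i t + r i * a j t)
      set σ := -(∑ t, a j t * u' t) / c with hσ
      have hju : ∑ t, a j t * (u' t + σ * u t) = 0 := by
        have : ∑ t, a j t * (u' t + σ * u t) = ∑ t, a j t * u' t + σ * c := by
          rw [hcdef, Finset.mul_sum, ← Finset.sum_add_distrib]
          exact Finset.sum_congr rfl fun t _ => by ring
        rw [this, hσ, div_mul_cancel₀ _ hc.ne]; ring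
      have hiu : ∀ i, ∑ t, a i t * (u' t + σ * u t) =
          ∑ t, (a i t + r i * a j t) * u' t := by
        intro i
        have h1 : ∑ t, a i t * (u' t + σ * u t) =
            ∑ t, a i t * u' t + σ * ∑ t, a i t * u t := by
          rw [Finset.mul_sum, ← Finset.sum_add_distrib]
          exact Finset.sum_congr rfl fun t _ => by ring
        have h2 : ∑ t, (a i t + r i * a j t) * u' t =
            ∑ t, a i t * u' t + r i * ∑ t, a j t * u' t := by
          rw [Finset.mul_sum, ← Finset.sum_add_distrib]
          exact Finset.sum_congr rfl fun t _ => by ring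
        rw [h1, h2, hσ, hr]; field_simp
      refine ⟨fun t => u' t + σ * u t,
        fun i => if i = j then ∑ i ∈ insert i₀ s, r i * y' i else y' i, ?_, ?_, ?_, ?_⟩
      · intro i; dsimp only; split_ifs
        · exact Finset.sum_nonneg fun i hi => mul_nonneg (hr0 i hi) (hy' i)
        · exact hy' i
      · intro t
        rw [Finset.sum_insert hjs]
        beta_reduce
        rw [if_pos rfl, ← h0' t, Finset.sum_mul,
          ← Finset.sum_add_distrib]
        exact Finset.sum_congr rfl fun i hi => by rw [if_neg (hne i hi)]; ring
      · intro i hi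
        rcases Finset.mem_insert.1 hi with rfl | hi
        · exact hju.ge
        · dsimp only; rw [hiu]; exact hu' i hi
      · dsimp only; rw [if_neg hij, hiu]; exact hpos'

theorem clear_denominators {α : Type*} [Fintype α] (f : α → ℚ) (hf : ∀ i, 0 ≤ f i) :
    ∃ (D : ℚ) (g : α → ℕ), 0 < D ∧ ∀ i, (g i : ℚ) = D * f i := by
  refine ⟨((∏ i, (f i).den : ℕ) : ℚ),
    fun i => (∏ j ∈ Finset.univ.erase i, (f j).den) * (f i).num.toNat, ?_, ?_⟩
  · exact_mod_cast Finset.prod_pos fun i _ => (f i).pos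
  · intro i
    have h1 : (((f i).num.toNat : ℕ) : ℚ) = (f i).den * f i := by
      rw [Rat.den_mul_eq_num]
      have : (((f i).num.toNat : ℕ) : ℤ) = (f i).num := Int.toNat_of_nonneg (Rat.num_nonneg.2 (hf i))
      exact_mod_cast this
    rw [← Finset.prod_erase_mul _ _ (Finset.mem_univ i)]
    push_cast
    rw [h1]; ring

/-- Integral form of Tucker's strictly complementary solutions of the dual systems
`A μ ≥ 0, μ ≥ 0` and `yᵀ A ≤ 0, y ≥ 0`: for every coordinate one of the two complementary
inequalities is strict. -/
theorem tucker {ι τ : Type*} [Fintype ι] [Fintype τ] (A : ι → τ → ℤ) :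
    ∃ (μ : τ → ℕ) (y : ι → ℕ),
      (∀ i, 0 ≤ ∑ t, A i t * μ t) ∧ (∀ t, ∑ i, y i * A i t ≤ 0) ∧
      (∀ t, 0 < μ t ∨ ∑ i, y i * A i t < 0) ∧ (∀ i, 0 < y i ∨ 0 < ∑ t, A i t * μ t) := by
  let a : ι ⊕ τ → τ → ℚ := Sum.elim (fun i t => (A i t : ℚ)) (fun t t' => if t' = t then 1 else 0)
  have key : ∀ j : ι ⊕ τ, ∃ (u : τ → ℚ) (y : ι ⊕ τ → ℚ), (∀ i, 0 ≤ y i) ∧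
      (∀ t, ∑ i, y i * a i t = 0) ∧ (∀ i, 0 ≤ ∑ t, a i t * u t) ∧
      0 < y j + ∑ t, a j t * u t := by
    intro j
    obtain ⟨u, y, h1, h2, h3, h4⟩ := tucker_aux j (Finset.univ.erase j) (by simp) a
    rw [Finset.insert_erase (Finset.mem_univ j)] at h2 h3
    exact ⟨u, y, h1, h2, fun i => h3 i (Finset.mem_univ i), h4⟩
  choose u y hy h0 hu hpos using key
  -- adding up the solutions makes every alternative hold at once
  let U : τ → ℚ := fun t => ∑ j, u j t
  let Y : ι ⊕ τ → ℚ := fun i => ∑ j, y j i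
  have hU : ∀ i, ∑ t, a i t * U t = ∑ j, ∑ t, a i t * u j t := by
    intro i; rw [Finset.sum_comm]
    exact Finset.sum_congr rfl fun t _ => by rw [Finset.mul_sum]
  have hY0 : ∀ t, ∑ i, Y i * a i t = 0 := by
    intro t
    simp only [Y, Finset.sum_mul]
    rw [Finset.sum_comm]
    exact Finset.sum_eq_zero fun j _ => h0 j t
  have hYnn : ∀ i, 0 ≤ Y i := fun i => Finset.sum_nonneg fun j _ => hy j i
  have hUnn : ∀ i, 0 ≤ ∑ t, a i t * U t := fun i => by
    rw [hU]; exact Finset.sum_nonneg fun j _ => hu j i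
  have hUY : ∀ i, 0 < Y i + ∑ t, a i t * U t := by
    intro i
    rw [hU]
    simp only [Y]
    rw [← Finset.sum_add_distrib]
    exact Finset.sum_pos' (fun j _ => add_nonneg (hy j i) (hu j i)) ⟨i, Finset.mem_univ _, hpos i⟩
  have haU : ∀ t, ∑ t', a (Sum.inr t) t' * U t' = U t := by intro t; simp [a]
  have hUt : ∀ t, 0 ≤ U t := fun t => by rw [← haU]; exact hUnn _
  have hYt : ∀ t, ∑ i, Y (Sum.inl i) * (A i t : ℚ) = - Y (Sum.inr t) := by
    intro t
    have := hY0 t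
    rw [Fintype.sum_sum_type] at this
    simp [a] at this
    linarith
  obtain ⟨D, μ, hD, hμ⟩ := clear_denominators U hUt
  obtain ⟨E, z, hE, hz⟩ := clear_denominators (fun i => Y (Sum.inl i)) (fun i => hYnn _)
  have e1 : ∀ i, ((∑ t, A i t * μ t : ℤ) : ℚ) = D * ∑ t, a (Sum.inl i) t * U t := by
    intro i; push_cast; rw [Finset.mul_sum]
    exact Finset.sum_congr rfl fun t _ => by simp [a, hμ]; ring
  have e2 : ∀ t, ((∑ i, z i * A i t : ℤ) : ℚ) = - (E * Y (Sum.inr t)) := by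
    intro t; push_cast; rw [← mul_neg, ← hYt, Finset.mul_sum]
    exact Finset.sum_congr rfl fun i _ => by rw [hz]; ring
  refine ⟨μ, z, ?_, ?_, ?_, ?_⟩
  · intro i
    have : (0 : ℚ) ≤ ((∑ t, A i t * μ t : ℤ) : ℚ) := by
      rw [e1]; exact mul_nonneg hD.le (hUnn _)
    exact_mod_cast this
  · intro t
    have : ((∑ i, z i * A i t : ℤ) : ℚ) ≤ 0 := by
      rw [e2]; linarith [mul_nonneg hE.le (hYnn (Sum.inr t))]
    exact_mod_cast this
  · intro t
    have h := hUY (Sum.inr t)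
    rw [haU] at h
    rcases (hUt t).lt_or_eq with h' | h'
    · left
      have : (0 : ℚ) < μ t := by rw [hμ]; positivity
      exact_mod_cast this
    · right
      have : ((∑ i, z i * A i t : ℤ) : ℚ) < 0 := by
        rw [e2]
        have : 0 < Y (Sum.inr t) := by linarith
        have := mul_pos hE this
        linarith
      exact_mod_cast this
  · intro i
    have h := hUY (Sum.inl i)
    rcases (hYnn (Sum.inl i)).lt_or_eq with h' | h'
    · left
      have : (0 : ℚ) < z i := by rw [hz]; exact mul_pos hE h'
      exact_mod_cast this
    · right
      have : (0 : ℚ) < ((∑ t, A i t * μ t : ℤ) : ℚ) := by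
        rw [e1]; exact mul_pos hD (by linarith)
      exact_mod_cast this

/-! ### Walks and their effects -/

section Walks

variable {Q X : Type}

/-- Transitions `(source, effect, target)` over states `Q` and counters `X`. -/
abbrev Tr (Q X : Type) : Type := Q × (X → ℤ) × Q

/-- `IsWalk p w q`: the transitions in `w` are consecutive and lead from `p` to `q`
(counter values are ignored). -/
def IsWalk : Q → List (Tr Q X) → Q → Prop
  | p, [], q => p = q
  | p, t :: w, q => t.1 = p ∧ IsWalk t.2.2 w q

/-- Total effect of a list of transitions on the counter `x`. -/
def eff (w : List (Tr Q X)) (x : X) : ℤ := (w.map fun t => t.2.1 x).sum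

/-- `Dip w D`: along `w` no counter `x` ever falls more than `D x` below its initial value. -/
def Dip (w : List (Tr Q X)) (D : X → ℤ) : Prop := ∀ u, u <+: w → ∀ x, -D x ≤ eff u x

/-- The closed walk `w` at `p` passes through `q`. -/
def Visits (p : Q) (w : List (Tr Q X)) (q : Q) : Prop :=
  ∃ w₁ w₂, w = w₁ ++ w₂ ∧ IsWalk p w₁ q ∧ IsWalk q w₂ p

@[simp] theorem eff_nil (x : X) : eff ([] : List (Tr Q X)) x = 0 := rfl

@[simp] theorem eff_cons (t : Tr Q X) (w : List (Tr Q X)) (x : X) :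
    eff (t :: w) x = t.2.1 x + eff w x := by simp [eff]

@[simp] theorem eff_append (w₁ w₂ : List (Tr Q X)) (x : X) :
    eff (w₁ ++ w₂) x = eff w₁ x + eff w₂ x := by simp [eff]

theorem isWalk_append {p q : Q} {w₁ w₂ : List (Tr Q X)} :
    IsWalk p (w₁ ++ w₂) q ↔ ∃ r, IsWalk p w₁ r ∧ IsWalk r w₂ q := by
  induction w₁ generalizing p with
  | nil => simp [IsWalk]
  | cons t w ih =>
    simp only [List.cons_append, IsWalk, ih]
    constructor
    · rintro ⟨h, r, h1, h2⟩; exact ⟨r, ⟨h, h1⟩, h2⟩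
    · rintro ⟨r, ⟨h, h1⟩, h2⟩; exact ⟨h, r, h1, h2⟩

theorem IsWalk.append {p q r : Q} {w₁ w₂ : List (Tr Q X)} (h₁ : IsWalk p w₁ r)
    (h₂ : IsWalk r w₂ q) : IsWalk p (w₁ ++ w₂) q := isWalk_append.2 ⟨r, h₁, h₂⟩

theorem IsWalk.end_unique {p q r : Q} {w : List (Tr Q X)} (h₁ : IsWalk p w q)
    (h₂ : IsWalk p w r) : q = r := by
  induction w generalizing p with
  | nil => exact h₁.symm.trans h₂
  | cons t w ih => exact ih h₁.2 h₂.2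

theorem eff_abs_le (w : List (Tr Q X)) (x : X) :
    |eff w x| ≤ (w.map fun t => |t.2.1 x|).sum := by
  induction w with
  | nil => simp
  | cons t w ih =>
    simp only [eff_cons, List.map_cons, List.sum_cons]
    exact (abs_add_le _ _).trans (by linarith)

/-- Every fixed list of transitions dips by at most a constant. -/
theorem exists_dip [Fintype X] (w : List (Tr Q X)) : ∃ K : ℕ, Dip w fun _ => (K : ℤ) := by
  let A : X → ℤ := fun x => (w.map fun t => |t.2.1 x|).sum
  refine ⟨∑ x : X, (A x).toNat, ?_⟩
  intro w' hw' x
  have h1 := neg_le_of_abs_le (eff_abs_le w' x)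
  have h2 : (w'.map fun t => |t.2.1 x|).sum ≤ A x := by
    obtain ⟨v, rfl⟩ := hw'
    simp only [A]
    rw [List.map_append, List.sum_append]
    have : 0 ≤ (v.map fun t => |t.2.1 x|).sum :=
      List.sum_nonneg (by simp only [List.mem_map]; rintro _ ⟨t, -, rfl⟩; exact abs_nonneg _)
    linarith
  have h3 : (A x).toNat ≤ ∑ x, (A x).toNat :=
    Finset.single_le_sum (f := fun x => (A x).toNat) (fun _ _ => Nat.zero_le _)
      (Finset.mem_univ x)
  have h4 := Int.self_le_toNat (A x)
  have h5 : (((A x).toNat : ℕ) : ℤ) ≤ ((∑ x, (A x).toNat : ℕ) : ℤ) := by exact_mod_cast h3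
  linarith

theorem Dip.mono {w : List (Tr Q X)} {D D' : X → ℤ} (h : Dip w D) (hD : ∀ x, D x ≤ D' x) :
    Dip w D' := fun w' hw' x => by linarith [h w' hw' x, hD x]

theorem prefix_append_cases {α : Type*} {l a b : List α} (h : l <+: a ++ b) :
    l <+: a ∨ ∃ l', l = a ++ l' ∧ l' <+: b := by
  obtain ⟨r, hr⟩ := h
  rcases List.append_eq_append_iff.1 hr with ⟨c, hc, -⟩ | ⟨c, hc, hb⟩
  · exact Or.inl ⟨c, hc.symm⟩
  · exact Or.inr ⟨c, hc, r, hb.symm⟩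

theorem Dip.append {w₁ w₂ : List (Tr Q X)} {D₁ D₂ D : X → ℤ} (h₁ : Dip w₁ D₁) (h₂ : Dip w₂ D₂)
    (hD₁ : ∀ x, D₁ x ≤ D x) (hD₂ : ∀ x, D₂ x ≤ D x + eff w₁ x) : Dip (w₁ ++ w₂) D := by
  intro w' hw' x
  rcases prefix_append_cases hw' with h | ⟨l, rfl, h⟩
  · linarith [h₁ w' h x, hD₁ x]
  · rw [eff_append]; linarith [h₂ l h x, hD₂ x]

/-- Inserting a closed walk into a walk adds up the dips. -/
theorem Dip.insert {w₁ w₂ c : List (Tr Q X)} {D E : X → ℤ} (h : Dip (w₁ ++ w₂) D) (hc : Dip c E)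
    (hE : ∀ x, 0 ≤ E x) : Dip (w₁ ++ (c ++ w₂)) fun x => D x + E x := by
  intro w' hw' x
  rcases prefix_append_cases hw' with h' | ⟨l, rfl, h'⟩
  · linarith [h w' (h'.trans (List.prefix_append _ _)) x, hE x]
  · rcases prefix_append_cases h' with h'' | ⟨l', rfl, h''⟩
    · rw [eff_append]; linarith [h w₁ (List.prefix_append _ _) x, hc l h'' x]
    · have := h (w₁ ++ l') ((List.prefix_append_right_inj _).2 h'') x
      simp only [eff_append] at this ⊢
      linarith [hc c List.prefix_rfl x]

/-- The word `w` repeated `m` times. -/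
def rep (m : ℕ) (w : List (Tr Q X)) : List (Tr Q X) := (List.replicate m w).flatten

@[simp] theorem rep_zero (w : List (Tr Q X)) : rep 0 w = [] := rfl

theorem rep_succ (m : ℕ) (w : List (Tr Q X)) : rep (m + 1) w = w ++ rep m w := by
  simp [rep, List.replicate_succ]

theorem mem_rep {m : ℕ} {w : List (Tr Q X)} {t : Tr Q X} (h : t ∈ rep m w) : t ∈ w := by
  simp only [rep, List.mem_flatten, List.mem_replicate] at h
  obtain ⟨l, ⟨-, rfl⟩, h⟩ := h
  exact h

theorem isWalk_rep {p : Q} {w : List (Tr Q X)} (h : IsWalk p w p) (m : ℕ) :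
    IsWalk p (rep m w) p := by
  induction m with
  | zero => rfl
  | succ m ih => rw [rep_succ]; exact h.append ih

theorem eff_rep (m : ℕ) (w : List (Tr Q X)) (x : X) : eff (rep m w) x = m * eff w x := by
  induction m with
  | zero => simp
  | succ m ih => rw [rep_succ, eff_append, ih]; push_cast; ring

theorem dip_rep {w : List (Tr Q X)} {D E : X → ℤ} (h : Dip w D) (hD : ∀ x, 0 ≤ D x)
    (hE : ∀ x, 0 ≤ E x) (hw : ∀ x, -E x ≤ eff w x) (m : ℕ) :
    Dip (rep m w) fun x => D x + m * E x := by
  induction m with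
  | zero =>
    intro w' hw' x
    rw [rep_zero, List.prefix_nil] at hw'
    subst hw'
    simpa using hD x
  | succ m ih =>
    rw [rep_succ]
    refine h.append ih (fun x => ?_) (fun x => ?_)
    · have := mul_nonneg (Int.natCast_nonneg (m + 1)) (hE x)
      linarith
    · push_cast; linarith [hw x]

theorem Visits.insert {p q r : Q} {w₁ w₂ c : List (Tr Q X)} (h₁ : IsWalk p w₁ q)
    (h₂ : IsWalk q w₂ p) (hc : IsWalk q c q) (h : Visits p (w₁ ++ w₂) r) :
    Visits p (w₁ ++ (c ++ w₂)) r := by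
  obtain ⟨a, b, hab, ha, hb⟩ := h
  rcases List.append_eq_append_iff.1 hab with ⟨d, rfl, rfl⟩ | ⟨d, rfl, rfl⟩
  · obtain ⟨q', hq', hd⟩ := isWalk_append.1 ha
    obtain rfl := h₁.end_unique hq'
    exact ⟨w₁ ++ (c ++ d), b, by simp, h₁.append (hc.append hd), hb⟩
  · obtain ⟨q', hq', hd⟩ := isWalk_append.1 h₁
    obtain rfl := ha.end_unique hq'
    exact ⟨a, d ++ (c ++ w₂), by simp, ha, hd.append (hc.append h₂)⟩

/-- Simultaneous insertion of closed walks `c q` at the states `q ∈ s` of a closed walk. -/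
theorem insert_many {p : Q} {w : List (Tr Q X)} (hw : IsWalk p w p) {D E : X → ℤ}
    (hD : Dip w D) (hE : ∀ x, 0 ≤ E x) (c : Q → List (Tr Q X)) (s : Finset Q)
    (hs : ∀ q ∈ s, Visits p w q) (hc : ∀ q ∈ s, IsWalk q (c q) q) (hcE : ∀ q ∈ s, Dip (c q) E) :
    ∃ w', IsWalk p w' p ∧ (∀ t ∈ w', t ∈ w ∨ ∃ q ∈ s, t ∈ c q) ∧
      (∀ x, eff w' x = eff w x + ∑ q ∈ s, eff (c q) x) ∧
      Dip w' (fun x => D x + s.card * E x) ∧ ∀ r, Visits p w r → Visits p w' r := by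
  induction s using Finset.induction_on with
  | empty => exact ⟨w, hw, fun t h => Or.inl h, by simp, by simpa using hD, fun _ h => h⟩
  | insert q s hq ih =>
    obtain ⟨w', h1, h2, h3, h4, h5⟩ := ih (fun r hr => hs r (Finset.mem_insert_of_mem hr))
      (fun r hr => hc r (Finset.mem_insert_of_mem hr))
      (fun r hr => hcE r (Finset.mem_insert_of_mem hr))
    have hq0 := Finset.mem_insert_self q s
    obtain ⟨w₁, w₂, rfl, hw₁, hw₂⟩ := h5 q (hs q hq0)
    refine ⟨w₁ ++ (c q ++ w₂), hw₁.append ((hc q hq0).append hw₂), ?_, ?_, ?_, ?_⟩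
    · intro t ht
      have ht' : t ∈ w₁ ++ w₂ ∨ t ∈ c q := by
        simp only [List.mem_append] at ht ⊢; tauto
      rcases ht' with h | h
      · rcases h2 t h with h | ⟨r, hr, h⟩
        exacts [Or.inl h, Or.inr ⟨r, Finset.mem_insert_of_mem hr, h⟩]
      · exact Or.inr ⟨q, hq0, h⟩
    · intro x
      have := h3 x
      rw [Finset.sum_insert hq]
      simp only [eff_append] at this ⊢
      linarith
    · refine (h4.insert (hcE q hq0) hE).mono fun x => ?_
      rw [Finset.card_insert_of_notMem hq]; push_cast; linarith
    · exact fun r hr => Visits.insert hw₁ hw₂ (hc q hq0) (h5 r hr)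

/-! ### Eulerian circuits -/

/-- `Conn T`: the equivalence relation of being in the same (weakly) connected component of the
graph with edge set `T`. -/
def Conn (T : Finset (Tr Q X)) : Q → Q → Prop :=
  Relation.EqvGen fun p q => ∃ u, (p, u, q) ∈ T

theorem Conn.refl (T : Finset (Tr Q X)) (p : Q) : Conn T p p := Relation.EqvGen.refl p

theorem Conn.symm {T : Finset (Tr Q X)} {p q : Q} (h : Conn T p q) : Conn T q p :=
  Relation.EqvGen.symm _ _ h

theorem Conn.trans {T : Finset (Tr Q X)} {p q r : Q} (h : Conn T p q) (h' : Conn T q r) :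
    Conn T p r := Relation.EqvGen.trans _ _ _ h h'

theorem Conn.of_mem {T : Finset (Tr Q X)} {t : Tr Q X} (h : t ∈ T) : Conn T t.1 t.2.2 :=
  Relation.EqvGen.rel _ _ ⟨t.2.1, h⟩

theorem Conn.mono {T T' : Finset (Tr Q X)} (h : T ⊆ T') {p q : Q} (hpq : Conn T p q) :
    Conn T' p q := Relation.EqvGen.mono (fun _ _ ⟨u, hu⟩ => ⟨u, h hu⟩) _ _ hpq

theorem IsWalk.conn {T : Finset (Tr Q X)} {p q : Q} {w : List (Tr Q X)} (h : IsWalk p w q)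
    (hw : ∀ t ∈ w, t ∈ T) : Conn T p q := by
  induction w generalizing p with
  | nil => rw [show p = q from h]; exact Conn.refl _ _
  | cons t w ih =>
    have h1 := Conn.of_mem (hw t (by simp))
    rw [h.1] at h1
    exact h1.trans (ih h.2 fun s hs => hw s (by simp [hs]))

/-- A nonnegative integral circulation on the edge set `T`. -/
def Circ (T : Finset (Tr Q X)) (μ : Tr Q X → ℕ) : Prop :=
  ∀ q, (∑ t ∈ T, if t.2.2 = q then μ t else 0) = ∑ t ∈ T, if t.1 = q then μ t else 0

theorem sum_count {T : Finset (Tr Q X)} {w : List (Tr Q X)} (hw : ∀ t ∈ w, t ∈ T)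
    (P : Tr Q X → Prop) :
    (∑ t ∈ T, if P t then w.count t else 0) = w.countP fun t => P t := by
  induction w with
  | nil => simp
  | cons t w ih =>
    rw [List.countP_cons, ← ih fun t' ht' => hw t' (by simp [ht'])]
    have : (if (decide (P t)) = true then 1 else 0) = ∑ t' ∈ T, if t' = t then (if P t' then 1 else 0) else 0 := by
      rw [Finset.sum_ite_eq']; simp [hw t (by simp)]
    rw [this, ← Finset.sum_add_distrib]
    refine Finset.sum_congr rfl fun t' _ => ?_
    rw [List.count_cons]
    by_cases h1 : t' = t
    · subst h1; by_cases h2 : P t' <;> simp [h2]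
    · have h1' : ¬ t = t' := fun h => h1 h.symm
      by_cases h2 : P t' <;> simp [h1, h2, h1']

theorem IsWalk.balance {p q : Q} {w : List (Tr Q X)} (h : IsWalk p w q) (r : Q) :
    (w.countP fun t => t.2.2 = r) + (if p = r then 1 else 0) =
      (w.countP fun t => t.1 = r) + if q = r then 1 else 0 := by
  induction w generalizing p with
  | nil => rw [show p = q from h]; simp
  | cons t w ih =>
    have := ih h.2
    rw [List.countP_cons, List.countP_cons]
    obtain ⟨rfl, -⟩ := h
    simp only [decide_eq_true_eq] at *
    omega

theorem exists_longest {α : Type*} {P : List α → Prop} (h : ∃ w, P w) (B : ℕ)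
    (hB : ∀ w, P w → w.length ≤ B) : ∃ w, P w ∧ ∀ w', P w' → w'.length ≤ w.length := by
  have hb : BddAbove {n | ∃ w, P w ∧ w.length = n} := ⟨B, by rintro _ ⟨w, hw, rfl⟩; exact hB w hw⟩
  obtain ⟨w₀, h₀⟩ := h
  obtain ⟨w, hw, hl⟩ := Nat.sSup_mem (s := {n | ∃ w, P w ∧ w.length = n}) ⟨_, w₀, h₀, rfl⟩ hb
  exact ⟨w, hw, fun w' hw' => hl ▸ le_csSup hb ⟨w', hw', rfl⟩⟩

theorem length_le_of_count {T : Finset (Tr Q X)} {ν : Tr Q X → ℕ} (hν : ∀ t, 0 < ν t → t ∈ T)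
    {w : List (Tr Q X)} (hw : ∀ t, w.count t ≤ ν t) : w.length ≤ ∑ t ∈ T, ν t := by
  have hT : ∀ t ∈ w, t ∈ T := fun t ht =>
    hν t (lt_of_lt_of_le (List.count_pos_iff.2 ht) (hw t))
  have := sum_count hT fun _ => True
  simp only [if_true, decide_true, List.countP_true] at this
  rw [← this]
  exact Finset.sum_le_sum fun t _ => hw t

/-- A longest walk inside a circulation that starts at `q` can only get stuck at `q`. -/
theorem exists_closed_walk {T : Finset (Tr Q X)} {ν : Tr Q X → ℕ} (hν : ∀ t, 0 < ν t → t ∈ T)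
    (hc : Circ T ν) {t₀ : Tr Q X} (ht₀ : 0 < ν t₀) :
    ∃ w, w ≠ [] ∧ IsWalk t₀.1 w t₀.1 ∧ ∀ t, w.count t ≤ ν t := by
  obtain ⟨w, ⟨⟨r, hr⟩, hw⟩, hmax⟩ := exists_longest
    (P := fun w => (∃ r, IsWalk t₀.1 w r) ∧ ∀ t, w.count t ≤ ν t)
    ⟨[], ⟨t₀.1, rfl⟩, by simp⟩ _ (fun w hw => length_le_of_count hν hw.2)
  have hT : ∀ t ∈ w, t ∈ T := fun t ht =>
    hν t (lt_of_lt_of_le (List.count_pos_iff.2 ht) (hw t))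
  have hstuck : ∀ t, t.1 = r → w.count t = ν t := by
    intro t ht
    by_contra hne
    have := hmax (w ++ [t]) ⟨⟨t.2.2, hr.append ⟨ht, rfl⟩⟩, fun t' => ?_⟩
    · simp at this
    · rw [List.count_append, List.count_singleton]
      by_cases h : t = t'
      · subst h; have := hw t; simp; omega
      · simpa [h] using hw t'
  have hb := hr.balance r
  rw [← sum_count hT, ← sum_count hT, if_pos rfl] at hb
  have h1 : (∑ t ∈ T, if t.1 = r then w.count t else 0) = ∑ t ∈ T, if t.1 = r then ν t else 0 :=
    Finset.sum_congr rfl fun t _ => by split_ifs with h; exacts [hstuck t h, rfl]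
  have h2 : (∑ t ∈ T, if t.2.2 = r then w.count t else 0) ≤
      ∑ t ∈ T, if t.2.2 = r then ν t else 0 :=
    Finset.sum_le_sum fun t _ => by split_ifs; exacts [hw t, le_rfl]
  rw [hc r, ← h1] at h2
  have hr' : t₀.1 = r := by by_contra h; rw [if_neg h] at hb; omega
  refine ⟨w, ?_, by rw [← hr'] at hr; exact hr, hw⟩
  rintro rfl
  have := hstuck t₀ hr'
  simp at this
  omega

theorem visits_of_mem {p : Q} {w : List (Tr Q X)} (hw : IsWalk p w p) {t : Tr Q X} (ht : t ∈ w) :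
    Visits p w t.1 ∧ Visits p w t.2.2 := by
  obtain ⟨a, b, rfl⟩ := List.append_of_mem ht
  obtain ⟨r, ha, hb⟩ := isWalk_append.1 hw
  obtain ⟨rfl, hb2⟩ := id hb
  exact ⟨⟨a, t :: b, rfl, ha, hb⟩, ⟨a ++ [t], b, by simp, ha.append ⟨rfl, rfl⟩, hb2⟩⟩

/-- An Eulerian circuit: a closed walk at `p` that uses every transition `t` of the connected
component of `p` exactly `μ t` times, and hence visits all states of the component. -/
theorem euler {T : Finset (Tr Q X)} {μ : Tr Q X → ℕ} (hμ : ∀ t, 0 < μ t ↔ t ∈ T)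
    (hc : Circ T μ) (p : Q) :
    ∃ w, IsWalk p w p ∧ (∀ t, w.count t = if Conn T t.1 p then μ t else 0) ∧
      ∀ q, Conn T p q → Visits p w q := by
  set ν : Tr Q X → ℕ := fun t => if Conn T t.1 p then μ t else 0 with hνdef
  have hν : ∀ t, 0 < ν t → t ∈ T := by
    intro t ht; simp only [hνdef] at ht; split_ifs at ht
    exacts [(hμ t).1 ht, absurd ht (lt_irrefl _)]
  have hνc : Circ T ν := by
    intro q
    by_cases hq : Conn T q p
    · have e1 : ∀ t ∈ T, (if t.2.2 = q then ν t else 0) = if t.2.2 = q then μ t else 0 := by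
        intro t ht
        split_ifs with h
        · simp only [hνdef]; rw [if_pos ((Conn.of_mem ht).trans (h ▸ hq))]
        · rfl
      have e2 : ∀ t ∈ T, (if t.1 = q then ν t else 0) = if t.1 = q then μ t else 0 := by
        intro t ht
        split_ifs with h
        · simp only [hνdef]; rw [if_pos (h ▸ hq)]
        · rfl
      rw [Finset.sum_congr rfl e1, Finset.sum_congr rfl e2]
      exact hc q
    · rw [Finset.sum_eq_zero, Finset.sum_eq_zero]
      · intro t ht
        split_ifs with h
        · simp only [hνdef]; rw [if_neg (h ▸ hq)]
        · rfl
      · intro t ht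
        split_ifs with h
        · simp only [hνdef]
          rw [if_neg fun h' => hq (h ▸ (Conn.of_mem ht).symm.trans h')]
        · rfl
  obtain ⟨w, ⟨hw, hcount⟩, hmax⟩ := exists_longest
    (P := fun w => IsWalk p w p ∧ ∀ t, w.count t ≤ ν t)
    ⟨[], rfl, by simp⟩ _ (fun w hw => length_le_of_count hν hw.2)
  have hT : ∀ t ∈ w, t ∈ T := fun t ht =>
    hν t (lt_of_lt_of_le (List.count_pos_iff.2 ht) (hcount t))
  have hres : Circ T fun t => ν t - w.count t := by
    intro q
    have hb := hw.balance q
    rw [← sum_count hT, ← sum_count hT] at hb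
    have hq := hνc q
    have split : ∀ P : Tr Q X → Prop, (∑ t ∈ T, if P t then ν t - w.count t else 0) +
        (∑ t ∈ T, if P t then w.count t else 0) = ∑ t ∈ T, if P t then ν t else 0 := by
      intro P
      rw [← Finset.sum_add_distrib]
      refine Finset.sum_congr rfl fun t _ => ?_
      split_ifs
      exacts [Nat.sub_add_cancel (hcount t), rfl]
    have s1 := split fun t => t.2.2 = q
    have s2 := split fun t => t.1 = q
    beta_reduce
    omega
  -- no unused edge leaves a visited state, as a closed walk could be inserted there
  have hout : ∀ t, Visits p w t.1 → w.count t = ν t := by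
    rintro t ⟨w₁, w₂, rfl, h₁, h₂⟩
    by_contra hne
    have hpos : 0 < ν t - (w₁ ++ w₂).count t := by have := hcount t; omega
    obtain ⟨c, hc0, hcw, hcc⟩ := exists_closed_walk (ν := fun t => ν t - (w₁ ++ w₂).count t)
      (fun t ht => hν t (by omega)) hres hpos
    have hlen := hmax (w₁ ++ (c ++ w₂)) ⟨h₁.append (hcw.append h₂), fun t' => ?_⟩
    · have := List.length_pos_iff.2 hc0
      simp only [List.length_append] at hlen
      omega
    · have h3 := hcc t'
      have h4 := hcount t'
      simp only [List.count_append] at h3 h4 ⊢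
      omega
  have hin : ∀ t ∈ T, Visits p w t.2.2 → w.count t = ν t := by
    intro t ht hv
    have h1 := hres t.2.2
    have h2 : (∑ t' ∈ T, if t'.1 = t.2.2 then ν t' - w.count t' else 0) = 0 :=
      Finset.sum_eq_zero fun t' _ => by
        split_ifs with h
        · rw [hout t' (h ▸ hv), Nat.sub_self]
        · rfl
    rw [h2, Finset.sum_eq_zero_iff] at h1
    have h3 := h1 t ht
    rw [if_pos rfl] at h3
    beta_reduce at h3
    have := hcount t
    omega
  have hvis : ∀ q r, Conn T q r → ((Conn T p q ∧ Visits p w q) ↔ (Conn T p r ∧ Visits p w r)) := by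
    intro q r h
    induction h with
    | rel q r h =>
      obtain ⟨u, hu⟩ := h
      have hqr : Conn T q r := Conn.of_mem hu
      have key : Conn T p q → w.count (q, u, r) = ν (q, u, r) → Visits p w q ∧ Visits p w r := by
        intro hpq hcnt
        have : 0 < w.count (q, u, r) := by
          rw [hcnt]; simp only [hνdef]; rw [if_pos hpq.symm]; exact (hμ _).2 hu
        exact visits_of_mem hw (List.count_pos_iff.1 this)
      constructor
      · rintro ⟨h1, h2⟩
        exact ⟨h1.trans hqr, (key h1 (hout (q, u, r) h2)).2⟩
      · rintro ⟨h1, h2⟩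
        have h3 := h1.trans hqr.symm
        exact ⟨h3, (key h3 (hin (q, u, r) hu h2)).1⟩
    | refl => exact Iff.rfl
    | symm _ _ _ ih => exact ih.symm
    | trans _ _ _ _ _ ih₁ ih₂ => exact ih₁.trans ih₂
  have hall : ∀ q, Conn T p q → Visits p w q := fun q hq =>
    ((hvis p q hq).1 ⟨Conn.refl _ _, [], w, rfl, rfl, hw⟩).2
  refine ⟨w, hw, fun t => ?_, hall⟩
  by_cases h : Conn T t.1 p
  · exact hout t (hall _ h.symm)
  · have h1 := hcount t
    simp only [hνdef] at h1 ⊢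
    rw [if_neg h] at h1 ⊢
    omega

end Walks

/-! ### Layered decomposition of a strongly connected component -/

section LayersSection

variable {Q X : Type}

/-- Effect on `x` of the part of `∑ t ∈ A, μ t • t` that lies in the `B`-component of `p`. -/
def compEff (A B : Finset (Tr Q X)) (μ : Tr Q X → ℕ) (p : Q) (x : X) : ℤ :=
  ∑ t ∈ A, if Conn B t.1 p then (μ t : ℤ) * t.2.1 x else 0

/-- Tucker's lemma applied to the circulations on `A` whose effect on each active counter `x` is
nonnegative in every component of the graph `B x`. The dual solution consists of state weights `z`
and counter weights that are constant on the `B x`-components; the resulting linear potential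
never increases along `A` and strictly decreases on the transitions that `μ` does not use. -/
theorem stage [Fintype Q] [Fintype X] (A : Finset (Tr Q X)) (act : X → Prop)
    (B : X → Finset (Tr Q X)) :
    ∃ (μ : Tr Q X → ℕ) (z : Q → ℕ) (y : X → Q → ℕ), (∀ t, 0 < μ t → t ∈ A) ∧ Circ A μ ∧
      (∀ x, act x → ∀ p, 0 ≤ compEff A (B x) μ p x) ∧
      (∀ x, act x → ∀ p, 0 < y x p ∨ 0 < compEff A (B x) μ p x) ∧
      ∀ t ∈ A, (z t.2.2 : ℤ) +
        (∑ x, ((if act x then ∑ p, (if Conn (B x) t.1 p then y x p else 0) else 0 : ℕ) : ℤ) *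
          t.2.1 x) + (if 0 < μ t then 0 else 1) ≤ z t.1 := by
  let M : Q ⊕ (X × Q) → A → ℤ := Sum.elim
    (fun q t => (if t.1.2.2 = q then 1 else 0) - (if t.1.1 = q then 1 else 0))
    (fun xp t => if act xp.1 ∧ Conn (B xp.1) t.1.1 xp.2 then t.1.2.1 xp.1 else 0)
  obtain ⟨m, y, h1, h2, h3, h4⟩ := tucker M
  let μ : Tr Q X → ℕ := fun t => if h : t ∈ A then m ⟨t, h⟩ else 0
  have hμ : ∀ t : A, μ t.1 = m t := fun t => by simp [μ]
  have hsum : ∀ f : Tr Q X → ℤ, (∑ t ∈ A, f t) = ∑ t : A, f t.1 := fun f =>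
    (Finset.sum_coe_sort A f).symm
  have hrow : ∀ x, act x → ∀ p, (∑ t, M (Sum.inr (x, p)) t * m t) = compEff A (B x) μ p x := by
    intro x hx p
    rw [compEff, hsum]
    refine Finset.sum_congr rfl fun t _ => ?_
    simp only [M, Sum.elim_inr, hμ, hx, true_and]
    split_ifs <;> ring
  have hq : ∀ q, (∑ t, M (Sum.inl q) t * m t) =
      (∑ t ∈ A, if t.2.2 = q then (μ t : ℤ) else 0) - ∑ t ∈ A, if t.1 = q then (μ t : ℤ) else 0 := by
    intro q
    rw [hsum, hsum, ← Finset.sum_sub_distrib]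
    refine Finset.sum_congr rfl fun t _ => ?_
    simp only [M, Sum.elim_inl, hμ]
    split_ifs <;> ring
  refine ⟨μ, fun q => y (Sum.inl q), fun x p => y (Sum.inr (x, p)), ?_, ?_, ?_, ?_, ?_⟩
  · intro t ht; by_contra h; simp [μ, h] at ht
  · -- the net inflows are nonnegative and add up to zero
    have htot : ∑ q, ∑ t, M (Sum.inl q) t * m t = 0 := by
      rw [Finset.sum_comm]
      refine Finset.sum_eq_zero fun t _ => ?_
      rw [← Finset.sum_mul]
      simp [M]
    have hz := (Finset.sum_eq_zero_iff_of_nonneg fun q _ => h1 (Sum.inl q)).1 htot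
    intro q
    have := hz q (Finset.mem_univ q)
    rw [hq, sub_eq_zero] at this
    exact_mod_cast this
  · intro x hx p; rw [← hrow x hx]; exact h1 _
  · intro x hx p; rw [← hrow x hx]; exact h4 _
  · intro t ht
    have key : (∑ i, y i * M i ⟨t, ht⟩) = (y (Sum.inl t.2.2) : ℤ) - y (Sum.inl t.1) +
        ∑ x, ((if act x then ∑ p, (if Conn (B x) t.1 p then y (Sum.inr (x, p)) else 0)
          else 0 : ℕ) : ℤ) * t.2.1 x := by
      rw [Fintype.sum_sum_type, Fintype.sum_prod_type]
      congr 1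
      · simp [M, mul_sub, Finset.sum_sub_distrib]
      · refine Finset.sum_congr rfl fun x _ => ?_
        by_cases hx : act x
        · simp only [M, Sum.elim_inr, hx, true_and, if_true]
          push_cast
          rw [Finset.sum_mul]
          refine Finset.sum_congr rfl fun p _ => ?_
          split_ifs <;> simp
        · simp [M, hx]
    have h5 := h2 ⟨t, ht⟩
    have h6 := h3 ⟨t, ht⟩
    rw [← hμ] at h6
    rw [key] at h5 h6
    split_ifs with h
    · linarith
    · have := h6.resolve_left h
      linarith

theorem compEff_filter {A B : Finset (Tr Q X)} {μ : Tr Q X → ℕ} (p : Q) (x : X) :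
    compEff (A.filter fun t => 0 < μ t) B μ p x = compEff A B μ p x := by
  rw [compEff, compEff, Finset.sum_filter]
  refine Finset.sum_congr rfl fun t _ => ?_
  by_cases h : 0 < μ t
  · simp [h]
  · have : μ t = 0 := by omega
    simp [this]

theorem circ_filter {A : Finset (Tr Q X)} {μ : Tr Q X → ℕ} (h : Circ A μ) :
    Circ (A.filter fun t => 0 < μ t) μ := by
  intro q
  rw [Finset.sum_filter, Finset.sum_filter]
  refine Eq.trans ?_ ((h q).trans ?_) <;>
  · refine Finset.sum_congr rfl fun t _ => ?_
    by_cases h : 0 < μ t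
    · simp [h]
    · have : μ t = 0 := by omega
      simp [this]

/-- The layered decomposition, up to layer `l`, of a strongly connected set of transitions `T₀`
around the state `p₀`, when counter `x` starts with a value of order `n ^ a x`.

* `T j` are the transitions that can be executed more often than `O(n ^ j)` times;
* `e x` is the exponent of the largest reachable value of `x`, where `e x = l + 1` means that the
  exponent has not been found to be at most `l`;
* `μ j` is a circulation with support `T j`; it is used for pumping;
* `z j` and `R j` are the state and counter weights of the potential
  `q, v ↦ z j q + ∑ x, R j x q * v x`, which is used for upper bounds. -/
structure Layers [Fintype X] (T₀ : Finset (Tr Q X)) (p₀ : Q) (a : X → ℕ) (l : ℕ)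
    (T : ℕ → Finset (Tr Q X)) (e : X → ℕ) (μ : ℕ → Tr Q X → ℕ) (z : ℕ → Q → ℕ)
    (R : ℕ → X → Q → ℕ) : Prop where
  T_zero : T 0 = T₀
  anti : ∀ j < l, T (j + 1) ⊆ T j
  e_cases : ∀ x, e x = l + 1 ∨ (a x ≤ e x ∧ e x ≤ l)
  mu_pos : ∀ j ≤ l, ∀ t, 0 < μ j t ↔ t ∈ T j
  circ : ∀ j ≤ l, Circ (T j) (μ j)
  /-- A `T i`-component is left `O(n ^ i)` times, so between two departures `μ j` is executed about
  `n ^ (j - i)` times there. A loss in `x` is therefore harmless iff `j - i < e x`, which is why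
  no loss is allowed in the components of `T (j - e x)`. The truncated subtraction is intended:
  for `j ≤ e x` only the total effect matters. -/
  eff_nonneg : ∀ j ≤ l, ∀ x, a x ≤ j → ∀ p, 0 ≤ compEff (T j) (T (j - e x)) (μ j) p x
  eff_pos : ∀ j ≤ l, ∀ x, a x ≤ j → j < e x → 0 < compEff (T j) (T 0) (μ j) p₀ x
  R_const : ∀ j < l, ∀ x p q, Conn (T (j + 1 - e x)) p q → R (j + 1) x p = R (j + 1) x q
  R_zero : ∀ j < l, ∀ x p, j + 1 < a x → R (j + 1) x p = 0
  R_pos : ∀ j < l, ∀ x p, a x ≤ j + 1 → e x = j + 1 → Conn (T 0) p₀ p → 0 < R (j + 1) x p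
  /-- Along `T j` the potential does not increase, and it decreases outside `T (j + 1)`. -/
  decr : ∀ j < l, ∀ t ∈ T j, (z (j + 1) t.2.2 : ℤ) + (∑ x, (R (j + 1) x t.1 : ℤ) * t.2.1 x) +
    (if t ∈ T (j + 1) then 0 else 1) ≤ z (j + 1) t.1

/-- Layer `0`: strong connectivity yields a circulation that uses every transition. -/
theorem exists_layers_zero [Fintype Q] [Fintype X] (T₀ : Finset (Tr Q X)) (p₀ : Q) (a : X → ℕ)
    (ha : ∀ x, 1 ≤ a x)
    (hsc : ∀ t ∈ T₀, ∃ w, IsWalk t.2.2 w t.1 ∧ ∀ t' ∈ w, t' ∈ T₀) :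
    ∃ T e μ z R, Layers T₀ p₀ a 0 T e μ z R := by
  obtain ⟨μ, z, y, h1, h2, -, -, h5⟩ := stage T₀ (fun _ => False) fun _ => T₀
  have hz : ∀ t ∈ T₀, (z t.2.2 : ℤ) + (if 0 < μ t then 0 else 1) ≤ z t.1 := by
    intro t ht; simpa using h5 t ht
  have hwalk : ∀ (w : List (Tr Q X)) (p q : Q), IsWalk p w q → (∀ t ∈ w, t ∈ T₀) → z q ≤ z p := by
    intro w
    induction w with
    | nil => intro p q h _; rw [show p = q from h]
    | cons t w ih =>
      intro p q h hw
      have h6 := ih _ _ h.2 fun t' ht' => hw t' (by simp [ht'])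
      have h7 := hz t (hw t (by simp))
      rw [← h.1]
      have : (0 : ℤ) ≤ if 0 < μ t then 0 else 1 := by split_ifs <;> simp
      omega
  refine ⟨fun _ => T₀, fun _ => 1, fun _ => μ, fun _ => z, 0, rfl, ?_, ?_, ?_, ?_, ?_, ?_, ?_, ?_,
    ?_, ?_⟩
  · exact fun j hj => absurd hj (Nat.not_lt_zero j)
  · exact fun x => Or.inl rfl
  · -- the potential `z` cannot decrease along a transition that lies on a cycle
    refine fun j _ t => ⟨h1 t, fun ht => ?_⟩
    by_contra h
    obtain ⟨w, hw, hwT⟩ := hsc t ht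
    have h6 := hwalk w _ _ hw hwT
    have h7 := hz t ht
    rw [if_neg h] at h7
    omega
  · exact fun _ _ => h2
  · exact fun j hj x hx => by have := ha x; omega
  · exact fun j hj x hx => by have := ha x; omega
  all_goals exact fun j hj => absurd hj (Nat.not_lt_zero j)

/-- Layer `l + 1` is obtained by applying `stage` to `T l`: the new set `T (l + 1)` is the support
of the circulation, and the counters it pumps get their provisional exponent raised to `l + 2`. -/
theorem exists_layers [Fintype Q] [Fintype X] (T₀ : Finset (Tr Q X)) (p₀ : Q) (a : X → ℕ)
    (ha : ∀ x, 1 ≤ a x)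
    (hsc : ∀ t ∈ T₀, ∃ w, IsWalk t.2.2 w t.1 ∧ ∀ t' ∈ w, t' ∈ T₀) (l : ℕ) :
    ∃ T e μ z R, Layers T₀ p₀ a l T e μ z R := by
  induction l with
  | zero => exact exists_layers_zero T₀ p₀ a ha hsc
  | succ l ih =>
    obtain ⟨T, e, μ, z, R, H⟩ := ih
    have he1 : ∀ x, 1 ≤ e x := fun x => by
      have := ha x; rcases H.e_cases x with h | h <;> omega
    obtain ⟨m, ζ, y, h1, h2, h3, h4, h5⟩ :=
      stage (T l) (fun x => a x ≤ l + 1) fun x => T (l + 1 - e x)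
    let e' : X → ℕ := fun x =>
      if e x = l + 1 ∧ (a x ≤ l + 1 → 0 < compEff (T l) (T 0) m p₀ x) then l + 2 else e x
    let T' : ℕ → Finset (Tr Q X) := fun j => if j ≤ l then T j else (T l).filter fun t => 0 < m t
    let μ' : ℕ → Tr Q X → ℕ := fun j => if j ≤ l then μ j else m
    let z' : ℕ → Q → ℕ := fun j => if j ≤ l then z j else ζ
    let R' : ℕ → X → Q → ℕ := fun j => if j ≤ l then R j else fun x q =>
      if a x ≤ l + 1 then ∑ p, (if Conn (T (l + 1 - e x)) q p then y x p else 0) else 0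
    have hT : ∀ j, j ≤ l → T' j = T j := fun j hj => if_pos hj
    have hμ : ∀ j, j ≤ l → μ' j = μ j := fun j hj => if_pos hj
    have hz : ∀ j, j ≤ l → z' j = z j := fun j hj => if_pos hj
    have hR : ∀ j, j ≤ l → R' j = R j := fun j hj => if_pos hj
    have hT1 : T' (l + 1) = (T l).filter fun t => 0 < m t := if_neg (by omega)
    have hμ1 : μ' (l + 1) = m := if_neg (by omega)
    have hz1 : z' (l + 1) = ζ := if_neg (by omega)
    have hR1 : R' (l + 1) = fun x q =>
      if a x ≤ l + 1 then ∑ p, (if Conn (T (l + 1 - e x)) q p then y x p else 0) else 0 :=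
      if_neg (by omega)
    -- `e'` differs from `e` only where both exceed `l`
    have hsub : ∀ j, j ≤ l + 1 → ∀ x, j - e' x = j - e x := by
      intro j hj x
      simp only [e']
      split_ifs with h
      · omega
      · rfl
    have hlt : ∀ j, j ≤ l → ∀ x, j < e' x ↔ j < e x := by
      intro j hj x
      simp only [e']
      split_ifs with h
      · omega
      · rfl
    have hTs : ∀ j, j ≤ l + 1 → ∀ x, T' (j - e' x) = T (j - e x) := by
      intro j hj x
      rw [hsub j hj, hT]
      have := he1 x
      omega
    refine ⟨T', e', μ', z', R', ?_, ?_, ?_, ?_, ?_, ?_, ?_, ?_, ?_, ?_, ?_⟩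
    · rw [hT 0 (Nat.zero_le _)]; exact H.T_zero
    · intro j hj
      rcases Nat.lt_succ_iff_lt_or_eq.1 hj with hj | rfl
      · rw [hT _ (by omega), hT _ (by omega)]; exact H.anti j hj
      · rw [hT1, hT _ le_rfl]; exact Finset.filter_subset _ _
    · intro x
      simp only [e']
      split_ifs with h
      · exact Or.inl rfl
      · right
        rcases H.e_cases x with h' | h'
        · rw [h'] at h ⊢
          simp only [true_and, Classical.not_imp] at h
          exact ⟨h.1, le_rfl⟩
        · exact ⟨h'.1, by omega⟩
    · intro j hj t
      rcases Nat.le_succ_iff.1 hj with hj | rfl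
      · rw [hT _ hj, hμ _ hj]; exact H.mu_pos j hj t
      · rw [hT1, hμ1, Finset.mem_filter]; exact ⟨fun h => ⟨h1 t h, h⟩, fun h => h.2⟩
    · intro j hj
      rcases Nat.le_succ_iff.1 hj with hj | rfl
      · rw [hT _ hj, hμ _ hj]; exact H.circ j hj
      · rw [hT1, hμ1]; exact circ_filter h2
    · intro j hj x hx p
      rw [hTs j hj]
      rcases Nat.le_succ_iff.1 hj with hj | rfl
      · rw [hT _ hj, hμ _ hj]; exact H.eff_nonneg j hj x hx p
      · rw [hT1, hμ1, compEff_filter]; exact h3 x hx p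
    · intro j hj x hx hjx
      rw [hT 0 (Nat.zero_le _)]
      rcases Nat.le_succ_iff.1 hj with hj | rfl
      · rw [hT _ hj, hμ _ hj]; exact H.eff_pos j hj x hx ((hlt j hj x).1 hjx)
      · rw [hT1, hμ1, compEff_filter]
        simp only [e'] at hjx
        split_ifs at hjx with h
        · exact h.2 hx
        · rcases H.e_cases x with h' | h' <;> omega
    · intro j hj x p q hpq
      rw [hTs _ (by omega)] at hpq
      rcases Nat.lt_succ_iff_lt_or_eq.1 hj with hj | rfl
      · rw [hR _ (by omega)]; exact H.R_const j hj x p q hpq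
      · rw [hR1]
        beta_reduce
        split_ifs
        · refine Finset.sum_congr rfl fun r _ => ?_
          have : Conn (T (j + 1 - e x)) p r ↔ Conn (T (j + 1 - e x)) q r :=
            ⟨fun h => hpq.symm.trans h, fun h => hpq.trans h⟩
          simp only [this]
        · rfl
    · intro j hj x p hx
      rcases Nat.lt_succ_iff_lt_or_eq.1 hj with hj | rfl
      · rw [hR _ (by omega)]; exact H.R_zero j hj x p hx
      · rw [hR1]; exact if_neg (by omega)
    · intro j hj x p hx hex hp
      rw [hT 0 (Nat.zero_le _)] at hp
      rcases Nat.lt_succ_iff_lt_or_eq.1 hj with hj | rfl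
      · rw [hR _ (by omega)]
        refine H.R_pos j hj x p hx ?_ hp
        have := hlt (j + 1) (by omega) x
        have := hlt j (by omega) x
        omega
      · have hex' : e x = j + 1 ∧ ¬ 0 < compEff (T j) (T 0) m p₀ x := by
          simp only [e'] at hex
          split_ifs at hex with h
          · omega
          · refine ⟨hex, fun h' => h ⟨hex, fun _ => h'⟩⟩
        have h6 := h4 x hx p₀
        rw [hex'.1, Nat.sub_self] at h6
        have h7 := h6.resolve_right hex'.2
        rw [hR1]
        beta_reduce
        rw [if_pos hx, hex'.1, Nat.sub_self]
        refine Finset.sum_pos' (fun _ _ => Nat.zero_le _) ⟨p₀, Finset.mem_univ _, ?_⟩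
        rw [if_pos hp.symm]
        exact h7
    · intro j hj t ht
      rw [hT _ (by omega)] at ht
      rcases Nat.lt_succ_iff_lt_or_eq.1 hj with hj | rfl
      · rw [hT _ (by omega), hz _ (by omega), hR _ (by omega)]; exact H.decr j hj t ht
      · have h6 := h5 t ht
        have h7 : t ∈ T' (j + 1) ↔ 0 < m t := by
          rw [hT1, Finset.mem_filter]; exact ⟨fun h => h.2, fun h => ⟨ht, h⟩⟩
        rw [hz1, hR1]
        simp only [h7]
        convert h6

end LayersSection

/-! ### Upper bounds from potentials -/

section UpperSection

variable {Q X : Type}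

/-- `Run T p v w q`: starting in `p` with counter values `v`, the transitions in `w` (all from
`T`) can be executed and lead to `q`, no counter ever becoming negative. -/
def Run (T : Finset (Tr Q X)) (p : Q) (v : X → ℤ) (w : List (Tr Q X)) (q : Q) : Prop :=
  (∀ t ∈ w, t ∈ T) ∧ IsWalk p w q ∧ ∀ u, u <+: w → ∀ x, 0 ≤ v x + eff u x

/-- Number of transitions in `w` lying outside `T`. -/
def cnt (T : Finset (Tr Q X)) (w : List (Tr Q X)) : ℕ := w.countP fun t => t ∉ T

theorem cnt_snoc [Fintype X] (T : Finset (Tr Q X)) (w : List (Tr Q X)) (t : Tr Q X) :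
    (cnt T (w ++ [t]) : ℤ) = cnt T w + if t ∈ T then 0 else 1 := by
  by_cases h : t ∈ T <;> simp [cnt, List.countP_append, h]

theorem Run.nonneg {T : Finset (Tr Q X)} {p q : Q} {v : X → ℤ} {w : List (Tr Q X)}
    (h : Run T p v w q) (x : X) : 0 ≤ v x + eff w x := h.2.2 w List.prefix_rfl x

theorem Run.start_nonneg {T : Finset (Tr Q X)} {p q : Q} {v : X → ℤ} {w : List (Tr Q X)}
    (h : Run T p v w q) (x : X) : 0 ≤ v x := by simpa using h.2.2 [] (List.nil_prefix) x

theorem Run.snoc {T : Finset (Tr Q X)} {p q : Q} {v : X → ℤ} {w : List (Tr Q X)} {t : Tr Q X}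
    (h : Run T p v (w ++ [t]) q) : t ∈ T ∧ t.2.2 = q ∧ Run T p v w t.1 := by
  obtain ⟨r, h1, h2, h3⟩ := isWalk_append.1 h.2.1
  subst h2
  exact ⟨h.1 t (by simp), h3, fun t' ht' => h.1 t' (by simp [ht']), h1,
    fun w' hw' => h.2.2 w' (hw'.trans (List.prefix_append _ _))⟩

theorem Layers.le_e [Fintype X] {T₀ : Finset (Tr Q X)} {p₀ : Q} {a : X → ℕ} {k : ℕ}
    {T : ℕ → Finset (Tr Q X)} {e : X → ℕ} {μ : ℕ → Tr Q X → ℕ} {z : ℕ → Q → ℕ}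
    {R : ℕ → X → Q → ℕ} (H : Layers T₀ p₀ a k T e μ z R) (hak : ∀ x, a x ≤ k + 1) (x : X) :
    a x ≤ e x := by
  have := hak x; rcases H.e_cases x with h | h <;> omega

theorem Layers.subset [Fintype X] {T₀ : Finset (Tr Q X)} {p₀ : Q} {a : X → ℕ} {k : ℕ}
    {T : ℕ → Finset (Tr Q X)} {e : X → ℕ} {μ : ℕ → Tr Q X → ℕ} {z : ℕ → Q → ℕ}
    {R : ℕ → X → Q → ℕ} (H : Layers T₀ p₀ a k T e μ z R) {i j : ℕ} (hij : i ≤ j) (hj : j ≤ k) :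
    T j ⊆ T i := by
  induction j, hij using Nat.le_induction with
  | base => exact subset_rfl
  | succ j hij ih => exact (H.anti j (by omega)).trans (ih (by omega))

/-- One step of the potential argument at stage `l + 1`, summed along a run: the potential
`z q + ∑ x, R x q * v x` drops by one for every transition outside `T (l + 1)`, except for the
increase caused by transitions outside `T l` and by changes of the weights `R x`. -/
theorem potential_run [Fintype X] {T₀ : Finset (Tr Q X)} {p₀ : Q} {a : X → ℕ} {k : ℕ}
    {T : ℕ → Finset (Tr Q X)} {e : X → ℕ} {μ : ℕ → Tr Q X → ℕ} {z : ℕ → Q → ℕ}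
    {R : ℕ → X → Q → ℕ} (H : Layers T₀ p₀ a k T e μ z R) {l : ℕ} (hl : l < k) {Rm C n K : ℕ}
    (hRm : ∀ x q, R (l + 1) x q ≤ Rm)
    (hC : ∀ t ∈ T₀, (z (l + 1) t.2.2 : ℤ) + (∑ x, (R (l + 1) x t.1 : ℤ) * t.2.1 x) + 1 ≤ C)
    {v : X → ℤ}
    (hK : ∀ w q, Run T₀ p₀ v w q → ∀ x, e x ≤ l → v x + eff w x ≤ K * (n : ℤ) ^ e x)
    (w : List (Tr Q X)) : ∀ q, Run T₀ p₀ v w q →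
    (z (l + 1) q : ℤ) + (∑ x, (R (l + 1) x q : ℤ) * (v x + eff w x)) + cnt (T (l + 1)) w ≤
      (z (l + 1) p₀ + ∑ x, (R (l + 1) x p₀ : ℤ) * v x) +
      (∑ x, if e x ≤ l then Rm * (K * (n : ℤ) ^ e x) * cnt (T (l + 1 - e x)) w else 0) +
      C * cnt (T l) w := by
  induction w using List.reverseRecOn with
  | nil =>
    intro q h
    have : p₀ = q := h.2.1
    subst this
    simp [cnt]
  | append_singleton w t ih =>
    intro q h
    obtain ⟨ht, rfl, hpre⟩ := h.snoc
    have h1 := ih _ hpre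
    -- contribution of the change of weights
    have h2 : ∀ x, ((R (l + 1) x t.2.2 : ℤ) - R (l + 1) x t.1) * (v x + eff (w ++ [t]) x) ≤
        if e x ≤ l then Rm * (K * (n : ℤ) ^ e x) *
          (if t ∈ T (l + 1 - e x) then 0 else 1) else 0 := by
      intro x
      by_cases hx : t ∈ T (l + 1 - e x)
      · rw [H.R_const l hl x _ _ (Conn.of_mem hx)]
        simp [hx]
      · have hel : e x ≤ l := by
          by_contra hcon
          rw [show l + 1 - e x = 0 by omega, H.T_zero] at hx
          exact hx ht
        rw [if_pos hel, if_neg hx, mul_one]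
        have hb := hK _ _ h x hel
        have h0 := h.nonneg x
        refine mul_le_mul ?_ hb h0 (by positivity)
        have := hRm x t.2.2
        have : (0 : ℤ) ≤ R (l + 1) x t.1 := by positivity
        zify at *
        linarith
    have h3 := Finset.sum_le_sum fun x (_ : x ∈ Finset.univ) => h2 x
    have h4 : (z (l + 1) t.2.2 : ℤ) + (∑ x, (R (l + 1) x t.1 : ℤ) * t.2.1 x) +
        (if t ∈ T (l + 1) then 0 else 1) ≤ z (l + 1) t.1 + C * (if t ∈ T l then 0 else 1) := by
      by_cases hx : t ∈ T l
      · simpa [hx] using H.decr l hl t hx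
      · have hx' : t ∉ T (l + 1) := fun h => hx (H.anti l hl h)
        have := hC t ht
        rw [if_neg hx, if_neg hx']
        have : (0 : ℤ) ≤ z (l + 1) t.1 := by positivity
        linarith
    have h5 : (∑ x, (R (l + 1) x t.2.2 : ℤ) * (v x + eff (w ++ [t]) x)) =
        (∑ x, (R (l + 1) x t.1 : ℤ) * (v x + eff w x)) +
        (∑ x, (R (l + 1) x t.1 : ℤ) * t.2.1 x) +
        ∑ x, ((R (l + 1) x t.2.2 : ℤ) - R (l + 1) x t.1) * (v x + eff (w ++ [t]) x) := by
      rw [← Finset.sum_add_distrib, ← Finset.sum_add_distrib]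
      refine Finset.sum_congr rfl fun x _ => ?_
      simp only [eff_append, eff_cons, eff_nil]
      ring
    have h6 : (∑ x, if e x ≤ l then Rm * (K * (n : ℤ) ^ e x) *
          cnt (T (l + 1 - e x)) (w ++ [t]) else 0) =
        (∑ x, if e x ≤ l then Rm * (K * (n : ℤ) ^ e x) * cnt (T (l + 1 - e x)) w else 0) +
        ∑ x, if e x ≤ l then Rm * (K * (n : ℤ) ^ e x) *
          (if t ∈ T (l + 1 - e x) then 0 else 1) else 0 := by
      rw [← Finset.sum_add_distrib]
      refine Finset.sum_congr rfl fun x _ => ?_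
      rw [cnt_snoc]
      split_ifs <;> ring
    rw [h5, h6, cnt_snoc, cnt_snoc, mul_add]
    linarith

/-- Upper bound for runs inside a strongly connected component: counters with finite exponent
`e x` stay in `O(n ^ e x)`, and transitions outside `T j` are executed `O(n ^ j)` times. -/
theorem upper_stage [Fintype Q] [Fintype X] {T₀ : Finset (Tr Q X)} {p₀ : Q} {a : X → ℕ} {k : ℕ}
    {T : ℕ → Finset (Tr Q X)} {e : X → ℕ} {μ : ℕ → Tr Q X → ℕ} {z : ℕ → Q → ℕ}
    {R : ℕ → X → Q → ℕ} (H : Layers T₀ p₀ a k T e μ z R) (ha : ∀ x, 1 ≤ a x)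
    (hak : ∀ x, a x ≤ k + 1) (M : ℕ) (l : ℕ) (hl : l ≤ k) :
    ∃ K : ℕ, ∀ n : ℕ, 1 ≤ n → ∀ v : X → ℤ, (∀ x, a x ≤ k → v x ≤ M * (n : ℤ) ^ a x) →
      ∀ w q, Run T₀ p₀ v w q → (∀ x, e x ≤ l → v x + eff w x ≤ K * (n : ℤ) ^ e x) ∧
        ∀ j ≤ l, (cnt (T j) w : ℤ) ≤ K * (n : ℤ) ^ j := by
  induction l with
  | zero =>
    refine ⟨0, fun n hn v hv w q h => ⟨fun x hx => ?_, fun j hj => ?_⟩⟩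
    · have := H.le_e hak x; have := ha x; omega
    · obtain rfl : j = 0 := by omega
      have : cnt (T 0) w = 0 := by
        rw [cnt, List.countP_eq_zero, H.T_zero]
        intro t ht; simpa using h.1 t ht
      simp [this]
  | succ l ih =>
    obtain ⟨K, hK⟩ := ih (by omega)
    have hl' : l < k := hl
    let Rm : ℕ := (∑ x, ∑ q, R (l + 1) x q) + ∑ q, z (l + 1) q
    have hRm : ∀ x q, R (l + 1) x q ≤ Rm := fun x q =>
      ((Finset.single_le_sum (f := fun q => R (l + 1) x q) (fun _ _ => Nat.zero_le _)
        (Finset.mem_univ q)).trans (Finset.single_le_sum (f := fun x => ∑ q, R (l + 1) x q)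
        (fun _ _ => Nat.zero_le _) (Finset.mem_univ x))).trans (Nat.le_add_right _ _)
    have hzm : ∀ q, z (l + 1) q ≤ Rm := fun q =>
      (Finset.single_le_sum (f := fun q => z (l + 1) q) (fun _ _ => Nat.zero_le _)
        (Finset.mem_univ q)).trans (Nat.le_add_left _ _)
    let F : Tr Q X → ℤ := fun t =>
      (z (l + 1) t.2.2 : ℤ) + (∑ x, (R (l + 1) x t.1 : ℤ) * t.2.1 x) + 1
    let C : ℕ := ∑ t ∈ T₀, (F t).toNat
    have hC : ∀ t ∈ T₀, F t ≤ C := fun t ht => (Int.self_le_toNat _).trans (by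
      exact_mod_cast Finset.single_le_sum (f := fun t => (F t).toNat)
        (fun _ _ => Nat.zero_le _) ht)
    let c := Fintype.card X
    let K' : ℕ := (Rm + c * (Rm * M)) + c * (Rm * K * K) + C * K
    refine ⟨K + K', fun n hn v hv w q h => ?_⟩
    have hn' : (1 : ℤ) ≤ n := by exact_mod_cast hn
    have hpot := potential_run H hl' hRm hC (fun w q h => (hK n hn v hv w q h).1) w q h
    obtain ⟨hb1, hb2⟩ := hK n hn v hv w q h
    have hnl : ∀ {i j : ℕ}, i ≤ j → (n : ℤ) ^ i ≤ (n : ℤ) ^ j := fun hij =>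
      pow_le_pow_right₀ hn' hij
    have hs1 : (z (l + 1) p₀ : ℤ) + ∑ x, (R (l + 1) x p₀ : ℤ) * v x ≤
        (Rm + c * (Rm * M)) * (n : ℤ) ^ (l + 1) := by
      have h1 : (z (l + 1) p₀ : ℤ) ≤ Rm * (n : ℤ) ^ (l + 1) := by
        have : (z (l + 1) p₀ : ℤ) ≤ Rm := by exact_mod_cast hzm p₀
        have h2 : (1 : ℤ) ≤ (n : ℤ) ^ (l + 1) := one_le_pow₀ hn'
        nlinarith [show (0 : ℤ) ≤ Rm by positivity]
      have h2 : ∑ x, (R (l + 1) x p₀ : ℤ) * v x ≤ c * (Rm * M * (n : ℤ) ^ (l + 1)) := by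
        have := Finset.sum_le_card_nsmul Finset.univ (fun x => (R (l + 1) x p₀ : ℤ) * v x)
          (Rm * M * (n : ℤ) ^ (l + 1)) ?_
        · simpa [c] using this
        · intro x _
          by_cases hx : a x ≤ l + 1
          · rw [mul_assoc]
            refine mul_le_mul (by exact_mod_cast hRm x p₀) ?_ (h.start_nonneg x) (by positivity)
            refine (hv x (by omega)).trans ?_
            gcongr
          · rw [H.R_zero l hl' x p₀ (by omega)]
            simp only [Nat.cast_zero, zero_mul]
            positivity
      linarith
    have hs2 : (∑ x, if e x ≤ l then Rm * (K * (n : ℤ) ^ e x) * cnt (T (l + 1 - e x)) w else 0) ≤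
        c * (Rm * K * K) * (n : ℤ) ^ (l + 1) := by
      have := Finset.sum_le_card_nsmul Finset.univ (fun x =>
        if e x ≤ l then Rm * (K * (n : ℤ) ^ e x) * cnt (T (l + 1 - e x)) w else 0)
          (Rm * K * K * (n : ℤ) ^ (l + 1)) ?_
      · simpa [c, mul_assoc] using this
      · intro x _
        split_ifs with hx
        · have he1 : 1 ≤ e x := (ha x).trans (H.le_e hak x)
          have h1 := hb2 (l + 1 - e x) (by omega)
          calc Rm * (K * (n : ℤ) ^ e x) * cnt (T (l + 1 - e x)) w
              ≤ Rm * (K * (n : ℤ) ^ e x) * (K * (n : ℤ) ^ (l + 1 - e x)) := by gcongr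
            _ = Rm * K * K * ((n : ℤ) ^ e x * (n : ℤ) ^ (l + 1 - e x)) := by ring
            _ = _ := by rw [← pow_add, show e x + (l + 1 - e x) = l + 1 by omega]
        · positivity
    have hs3 : (C : ℤ) * cnt (T l) w ≤ C * K * (n : ℤ) ^ (l + 1) := by
      rw [mul_assoc]
      have := hb2 l le_rfl
      gcongr
      refine this.trans (mul_le_mul_of_nonneg_left (hnl (Nat.le_succ l)) (by positivity))
    have htot : (z (l + 1) q : ℤ) + (∑ x, (R (l + 1) x q : ℤ) * (v x + eff w x)) +
        cnt (T (l + 1)) w ≤ K' * (n : ℤ) ^ (l + 1) := by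
      refine hpot.trans ?_
      simp only [K']
      push_cast
      linarith
    have hpos : ∀ x ∈ Finset.univ, 0 ≤ (R (l + 1) x q : ℤ) * (v x + eff w x) := fun x _ =>
      mul_nonneg (by positivity) (h.nonneg x)
    have hK0 : ∀ j, (0 : ℤ) ≤ K * (n : ℤ) ^ j := fun j => by positivity
    have hK1 : ∀ j, (0 : ℤ) ≤ K' * (n : ℤ) ^ j := fun j => by positivity
    refine ⟨fun x hx => ?_, fun j hj => ?_⟩
    · push_cast
      rw [add_mul]
      rcases (by omega : e x ≤ l ∨ e x = l + 1) with hx | hx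
      · linarith [hb1 x hx, hK1 (e x)]
      · have hq : Conn (T 0) p₀ q := h.2.1.conn (by rw [H.T_zero]; exact h.1)
        have hR := H.R_pos l hl' x q (hx ▸ H.le_e hak x) hx hq
        have h1 := Finset.single_le_sum hpos (Finset.mem_univ x)
        have h2 : v x + eff w x ≤ (R (l + 1) x q : ℤ) * (v x + eff w x) :=
          le_mul_of_one_le_left (h.nonneg x) (by exact_mod_cast hR)
        rw [hx] at *
        have := hK0 (l + 1)
        have : (0 : ℤ) ≤ z (l + 1) q := by positivity
        have : (0 : ℤ) ≤ cnt (T (l + 1)) w := by positivity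
        linarith
    · push_cast
      rw [add_mul]
      rcases (by omega : j ≤ l ∨ j = l + 1) with hj | rfl
      · linarith [hb2 j hj, hK1 j]
      · have := Finset.sum_nonneg hpos
        have := hK0 (l + 1)
        have : (0 : ℤ) ≤ z (l + 1) q := by positivity
        linarith

end UpperSection

/-! ### Lower bounds from nested Eulerian circuits -/

section LowerSection

variable {Q X : Type}

/-- Every `B'`-component is a disjoint union of `B`-components when `B ⊆ B'`; `s` collects one
state from each of the `B`-components contained in the `B'`-component of `p`. -/
theorem exists_reps [Fintype Q] {B B' : Finset (Tr Q X)} (h : B ⊆ B') (p : Q) :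
    ∃ s : Finset Q, (∀ q ∈ s, Conn B' p q) ∧ ∀ (A : Finset (Tr Q X)) (μ : Tr Q X → ℕ) (x : X),
      ∑ q ∈ s, compEff A B μ q x = compEff A B' μ p x := by
  let S : Setoid Q := ⟨Conn B, Conn.refl B, Conn.symm, Conn.trans⟩
  let r : Q → Q := fun q => (Quotient.mk S q).out
  have hr : ∀ q, Conn B (r q) q := fun q => Quotient.exact (s := S) (Quotient.out_eq _)
  have hr' : ∀ q q', Conn B q q' → r q = r q' := fun q q' h => by
    simp only [r]; rw [Quotient.sound (s := S) h]
  refine ⟨Finset.univ.filter fun q => r q = q ∧ Conn B' p q, by simp, fun A μ x => ?_⟩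
  simp only [compEff]
  rw [Finset.sum_comm]
  refine Finset.sum_congr rfl fun t _ => ?_
  by_cases ht : Conn B' t.1 p
  · rw [if_pos ht, Finset.sum_eq_single (r t.1)]
    · rw [if_pos (hr _).symm]
    · intro q hq hne
      rw [if_neg]
      intro hc
      simp only [Finset.mem_filter, Finset.mem_univ, true_and] at hq
      exact hne (by rw [hr' _ _ hc, hq.1])
    · intro hn
      exact absurd (Finset.mem_filter.2 ⟨Finset.mem_univ _, hr' _ _ (hr _),
        ht.symm.trans ((hr _).symm.mono h)⟩) hn
  · rw [if_neg ht]
    refine Finset.sum_eq_zero fun q hq => if_neg fun hc => ht ?_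
    simp only [Finset.mem_filter, Finset.mem_univ, true_and] at hq
    exact (hc.mono h).trans hq.2.symm

theorem compEff_coarsen [Fintype Q] {B B' : Finset (Tr Q X)} (h : B ⊆ B') {A : Finset (Tr Q X)}
    {μ : Tr Q X → ℕ} {x : X} (h0 : ∀ q, 0 ≤ compEff A B μ q x) (p : Q) :
    0 ≤ compEff A B' μ p x := by
  obtain ⟨s, -, hs⟩ := exists_reps h p
  rw [← hs]
  exact Finset.sum_nonneg fun q _ => h0 q

theorem eff_eq_sum {T : Finset (Tr Q X)} {w : List (Tr Q X)} (hw : ∀ t ∈ w, t ∈ T) (x : X) :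
    eff w x = ∑ t ∈ T, (w.count t : ℤ) * t.2.1 x := by
  induction w with
  | nil => simp
  | cons t w ih =>
    have ht := hw t (by simp)
    rw [eff_cons, ih fun t' ht' => hw t' (by simp [ht'])]
    simp only [List.count_cons, Nat.cast_add, add_mul, Finset.sum_add_distrib]
    rw [add_comm]
    congr 1
    rw [Finset.sum_eq_single t]
    · simp
    · intro b _ hb; simp [hb.symm]
    · intro h; exact absurd ht h

theorem euler_eff {T : Finset (Tr Q X)} {μ : Tr Q X → ℕ} (hμ : ∀ t, 0 < μ t ↔ t ∈ T)
    (hc : Circ T μ) (p : Q) :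
    ∃ w, IsWalk p w p ∧ (∀ t ∈ w, t ∈ T) ∧ (∀ x, eff w x = compEff T T μ p x) ∧
      ∀ q, Conn T p q → Visits p w q := by
  obtain ⟨w, h1, h2, h3⟩ := euler hμ hc p
  have hT : ∀ t ∈ w, t ∈ T := by
    intro t ht
    have := List.count_pos_iff.2 ht
    rw [h2] at this
    split_ifs at this
    · exact (hμ t).1 this
    · omega
  refine ⟨w, h1, hT, fun x => ?_, h3⟩
  rw [eff_eq_sum hT, compEff]
  refine Finset.sum_congr rfl fun t _ => ?_
  rw [h2]
  split_ifs <;> simp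

theorem Run.append {T : Finset (Tr Q X)} {p q r : Q} {v : X → ℤ} {w w' : List (Tr Q X)}
    (h : Run T p v w q) (h' : Run T q (fun x => v x + eff w x) w' r) : Run T p v (w ++ w') r := by
  refine ⟨fun t ht => (List.mem_append.1 ht).elim (h.1 t) (h'.1 t), h.2.1.append h'.2.1,
    fun u hu x => ?_⟩
  rcases prefix_append_cases hu with h1 | ⟨u', rfl, h1⟩
  · exact h.2.2 u h1 x
  · have h2 := h'.2.2 _ h1 x
    rw [eff_append, ← add_assoc]; exact h2

/-- The exponent of `x` guaranteed after the first `l` pumping stages. -/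
def fexp (a e : X → ℕ) (l : ℕ) (x : X) : ℕ := min (e x) (max (a x) l)

variable [Fintype Q] [Fintype X] {T₀ : Finset (Tr Q X)} {p₀ : Q} {a : X → ℕ} {k : ℕ}
    {T : ℕ → Finset (Tr Q X)} {e : X → ℕ} {μ : ℕ → Tr Q X → ℕ} {z : ℕ → Q → ℕ}
    {R : ℕ → X → Q → ℕ}

/-- A negative contribution of layer `i + s` to counter `x` is of order at most
`m ^ (fexp a e l x - 1)`. -/
theorem term_lower (H : Layers T₀ p₀ a k T e μ z R) (ha : ∀ x, 1 ≤ a x)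
    (hak : ∀ x, a x ≤ k + 1) {l : ℕ} (hl : l ≤ k) {i s : ℕ} (his : i + s ≤ l) {C : ℕ} {p : Q}
    {x : X} (hC : -(C : ℤ) ≤ compEff (T (i + s)) (T i) (μ (i + s)) p x) {m : ℕ} (hm : 1 ≤ m) :
    -(C * (m : ℤ) ^ (fexp a e l x - 1)) ≤
      (m : ℤ) ^ s * compEff (T (i + s)) (T i) (μ (i + s)) p x := by
  have hm' : (1 : ℤ) ≤ m := by exact_mod_cast hm
  have hae := H.le_e hak x
  have ha1 := ha x
  have hsmall : s ≤ fexp a e l x - 1 → -(C * (m : ℤ) ^ (fexp a e l x - 1)) ≤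
      (m : ℤ) ^ s * compEff (T (i + s)) (T i) (μ (i + s)) p x := by
    intro hs
    have h1 : (m : ℤ) ^ s ≤ (m : ℤ) ^ (fexp a e l x - 1) := pow_le_pow_right₀ hm' hs
    have h2 : (0 : ℤ) ≤ (m : ℤ) ^ s := by positivity
    have h3 := mul_le_mul_of_nonneg_left hC h2
    have h4 := mul_le_mul_of_nonneg_left h1 (show (0 : ℤ) ≤ C by positivity)
    linarith
  by_cases h1 : i + s < a x
  · exact hsmall (by simp only [fexp]; omega)
  · by_cases h2 : i ≤ i + s - e x
    · have h3 := compEff_coarsen (H.subset h2 (by omega))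
        (H.eff_nonneg (i + s) (by omega) x (by omega)) p
      have h4 : (0 : ℤ) ≤ C * (m : ℤ) ^ (fexp a e l x - 1) := by positivity
      have h5 : (0 : ℤ) ≤ (m : ℤ) ^ s * compEff (T (i + s)) (T i) (μ (i + s)) p x :=
        mul_nonneg (by positivity) h3
      linarith
    · exact hsmall (by simp only [fexp]; omega)

/-- The layers `i, …, i + d'` together, layer `i + s` being executed `m ^ s` times, lose at most
`O(m ^ (fexp a e l x - 1))` of counter `x`. -/
theorem sum_lower (H : Layers T₀ p₀ a k T e μ z R) (ha : ∀ x, 1 ≤ a x)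
    (hak : ∀ x, a x ≤ k + 1) {l : ℕ} (hl : l ≤ k) {i d : ℕ} (hid : i + d = l) :
    ∃ K : ℕ, ∀ m : ℕ, 1 ≤ m → ∀ p x, ∀ d' ≤ d, -(K * (m : ℤ) ^ (fexp a e l x - 1)) ≤
      ∑ s ∈ Finset.range (d' + 1), (m : ℤ) ^ s * compEff (T (i + s)) (T i) (μ (i + s)) p x := by
  let F : ℕ → Q → X → ℕ := fun s p x => (compEff (T (i + s)) (T i) (μ (i + s)) p x).natAbs
  let C : ℕ := ∑ s ∈ Finset.range (d + 1), ∑ p, ∑ x, F s p x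
  have hC : ∀ s ∈ Finset.range (d + 1), ∀ p x, F s p x ≤ C := fun s hs p x =>
    ((Finset.single_le_sum (f := fun x => F s p x) (fun _ _ => Nat.zero_le _)
      (Finset.mem_univ x)).trans (Finset.single_le_sum (f := fun p => ∑ x, F s p x)
      (fun _ _ => Nat.zero_le _) (Finset.mem_univ p))).trans
      (Finset.single_le_sum (f := fun s => ∑ p, ∑ x, F s p x) (fun _ _ => Nat.zero_le _) hs)
  refine ⟨(d + 1) * C, fun m hm p x d' hd' => ?_⟩
  have h1 := Finset.card_nsmul_le_sum (Finset.range (d' + 1))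
    (fun s => (m : ℤ) ^ s * compEff (T (i + s)) (T i) (μ (i + s)) p x)
    (-(C * (m : ℤ) ^ (fexp a e l x - 1))) ?_
  · refine le_trans ?_ h1
    rw [Finset.card_range, nsmul_eq_mul]
    push_cast
    have h2 : (0 : ℤ) ≤ C * (m : ℤ) ^ (fexp a e l x - 1) := by positivity
    have h3 : (d' : ℤ) ≤ d := by exact_mod_cast hd'
    nlinarith
  · intro s hs
    rw [Finset.mem_range] at hs
    refine term_lower H ha hak hl (by omega) ?_ hm
    have h3 := hC s (Finset.mem_range.2 (by omega)) p x
    simp only [F] at h3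
    omega

/-- The pumping walk: a closed walk at `p` executing the circulation of layer `i + s` about
`m ^ s` times for `s = 0, …, d`, with controlled dips. It is built by inserting `m` copies of the
walks for layer `i + 1` into an Eulerian circuit of layer `i`. -/
theorem exists_block (H : Layers T₀ p₀ a k T e μ z R) (ha : ∀ x, 1 ≤ a x)
    (hak : ∀ x, a x ≤ k + 1) {l : ℕ} (hl : l ≤ k) (d : ℕ) : ∀ i, i + d = l →
    ∃ K : ℕ, ∀ m : ℕ, 1 ≤ m → ∀ p, ∃ B, IsWalk p B p ∧ (∀ t ∈ B, t ∈ T i) ∧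
      (∀ x, eff B x = ∑ s ∈ Finset.range (d + 1),
        (m : ℤ) ^ s * compEff (T (i + s)) (T i) (μ (i + s)) p x) ∧
      Dip B fun x => K * (m : ℤ) ^ fexp a e l x := by
  have hf : ∀ x, 1 ≤ fexp a e l x := fun x => by
    have := H.le_e hak x; have := ha x; simp only [fexp]; omega
  have circuits : ∀ i ≤ k, ∃ (E : Q → List (Tr Q X)) (K : ℕ), ∀ p, IsWalk p (E p) p ∧
      (∀ t ∈ E p, t ∈ T i) ∧ (∀ x, eff (E p) x = compEff (T i) (T i) (μ i) p x) ∧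
      (∀ q, Conn (T i) p q → Visits p (E p) q) ∧
      ∀ m : ℕ, 1 ≤ m → Dip (E p) fun x => K * (m : ℤ) ^ fexp a e l x := by
    intro i hi
    choose E h1 h2 h3 h4 using fun p => euler_eff (H.mu_pos i hi) (H.circ i hi) p
    choose κ hκ using fun p => exists_dip (E p)
    refine ⟨E, ∑ p, κ p, fun p => ⟨h1 p, h2 p, h3 p, h4 p, fun m hm => (hκ p).mono fun x => ?_⟩⟩
    have h5 : (κ p : ℤ) ≤ (∑ p, κ p : ℕ) := by
      exact_mod_cast Finset.single_le_sum (f := κ) (fun _ _ => Nat.zero_le _) (Finset.mem_univ p)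
    refine h5.trans (le_mul_of_one_le_right (by positivity) ?_)
    exact one_le_pow₀ (by exact_mod_cast hm)
  induction d with
  | zero =>
    intro i hi
    obtain ⟨E, K, hE⟩ := circuits i (by omega)
    refine ⟨K, fun m hm p => ⟨E p, (hE p).1, (hE p).2.1, fun x => ?_, (hE p).2.2.2.2 m hm⟩⟩
    simpa using (hE p).2.2.1 x
  | succ d ih =>
    intro i hi
    obtain ⟨K, hK⟩ := ih (i + 1) (by omega)
    obtain ⟨K₁, hK₁⟩ := sum_lower H ha hak hl (i := i + 1) (d := d) (by omega)
    obtain ⟨E, KE, hE⟩ := circuits i (by omega)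
    refine ⟨KE + Fintype.card Q * (K + K₁), fun m hm p => ?_⟩
    choose B hB1 hB2 hB3 hB4 using hK m hm
    obtain ⟨s, hs1, hs2⟩ := exists_reps (H.anti i (by omega)) p
    obtain ⟨hE1, hE2, hE3, hE4, hE5⟩ := hE p
    have hm0 : ∀ j : ℕ, (0 : ℤ) ≤ (m : ℤ) ^ j := fun j => by positivity
    have hdip : ∀ q ∈ s, Dip (rep m (B q)) fun x => (K + K₁) * (m : ℤ) ^ fexp a e l x := by
      intro q _
      refine (dip_rep (hB4 q) (fun x => by positivity)
        (E := fun x => K₁ * (m : ℤ) ^ (fexp a e l x - 1)) (fun x => by positivity)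
        (fun x => ?_) m).mono fun x => ?_
      · rw [hB3]; exact hK₁ m hm q x d le_rfl
      · refine le_of_eq ?_
        have h1 : (m : ℤ) ^ fexp a e l x = m * (m : ℤ) ^ (fexp a e l x - 1) := by
          rw [← pow_succ', Nat.sub_add_cancel (hf x)]
        rw [add_mul]
        congr 1
        rw [h1]; ring
    obtain ⟨w, hw1, hw2, hw3, hw4, -⟩ := insert_many hE1 (hE5 m hm)
      (E := fun x => (K + K₁) * (m : ℤ) ^ fexp a e l x) (fun x => by positivity)
      (fun q => rep m (B q)) s (fun q hq => hE4 q (hs1 q hq)) (fun q _ => isWalk_rep (hB1 q) m)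
      hdip
    refine ⟨w, hw1, fun t ht => ?_, fun x => ?_, hw4.mono fun x => ?_⟩
    · rcases hw2 t ht with h | ⟨q, -, h⟩
      · exact hE2 t h
      · exact H.anti i (by omega) (hB2 q t (mem_rep h))
    · rw [hw3, hE3, Finset.sum_range_succ']
      simp only [pow_zero, one_mul, add_zero]
      rw [add_comm]
      congr 1
      simp only [eff_rep, hB3, Finset.mul_sum]
      rw [Finset.sum_comm]
      refine Finset.sum_congr rfl fun j _ => ?_
      rw [← hs2, Finset.mul_sum, show i + (j + 1) = i + 1 + j by omega]
      refine Finset.sum_congr rfl fun q _ => ?_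
      ring
    · have h1 : (s.card : ℤ) ≤ Fintype.card Q := by exact_mod_cast Finset.card_le_univ s
      have h2 : (0 : ℤ) ≤ (K + K₁) * (m : ℤ) ^ fexp a e l x := by positivity
      push_cast
      nlinarith

/-- Repeating the walk of `exists_block` for the layers `0, …, l` another `m` times gives a cycle
at `p₀` whose dips are of the order of the values already available, and which raises to order
`m ^ (l + 1)` every counter `x` with `a x ≤ l < e x`. -/
theorem exists_pump (H : Layers T₀ p₀ a k T e μ z R) (ha : ∀ x, 1 ≤ a x)
    (hak : ∀ x, a x ≤ k + 1) {l : ℕ} (hl : l ≤ k) :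
    ∃ K : ℕ, ∀ m : ℕ, 1 ≤ m → ∃ W, IsWalk p₀ W p₀ ∧ (∀ t ∈ W, t ∈ T₀) ∧
      (Dip W fun x => K * (m : ℤ) ^ fexp a e l x) ∧
      ∀ x, a x ≤ l → l < e x → (m : ℤ) ^ (l + 1) - K * (m : ℤ) ^ l ≤ eff W x := by
  have hf : ∀ x, 1 ≤ fexp a e l x := fun x => by
    have := H.le_e hak x; have := ha x; simp only [fexp]; omega
  obtain ⟨K, hK⟩ := exists_block H ha hak hl l 0 (by omega)
  obtain ⟨K₁, hK₁⟩ := sum_lower H ha hak hl (i := 0) (d := l) (by omega)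
  refine ⟨K + K₁, fun m hm => ?_⟩
  obtain ⟨B, hB1, hB2, hB3, hB4⟩ := hK m hm p₀
  have hm' : (1 : ℤ) ≤ m := by exact_mod_cast hm
  refine ⟨rep m B, isWalk_rep hB1 m, fun t ht => H.T_zero ▸ hB2 t (mem_rep ht), ?_,
    fun x hx1 hx2 => ?_⟩
  · refine (dip_rep hB4 (fun x => by positivity)
      (E := fun x => K₁ * (m : ℤ) ^ (fexp a e l x - 1)) (fun x => by positivity)
      (fun x => ?_) m).mono fun x => ?_
    · rw [hB3]; exact hK₁ m hm p₀ x l le_rfl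
    · refine le_of_eq ?_
      have h1 : (m : ℤ) ^ fexp a e l x = m * (m : ℤ) ^ (fexp a e l x - 1) := by
        rw [← pow_succ', Nat.sub_add_cancel (hf x)]
      push_cast
      rw [add_mul]
      congr 1
      rw [h1]; ring
  · have hl1 : 1 ≤ l := (ha x).trans hx1
    have hfl : fexp a e l x = l := by simp only [fexp]; omega
    have h1 := hK₁ m hm p₀ x (l - 1) (by omega)
    rw [hfl, Nat.sub_add_cancel hl1] at h1
    have h2 := H.eff_pos l hl x hx1 hx2
    have h3 : (m : ℤ) ^ l ≤ (m : ℤ) ^ l * compEff (T l) (T 0) (μ l) p₀ x :=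
      le_mul_of_one_le_right (by positivity) h2
    rw [eff_rep, hB3, Finset.sum_range_succ]
    simp only [zero_add] at h1 ⊢
    have h4 : (m : ℤ) ^ l - K₁ * (m : ℤ) ^ (l - 1) ≤ (∑ s ∈ Finset.range l,
        (m : ℤ) ^ s * compEff (T s) (T 0) (μ s) p₀ x) +
        (m : ℤ) ^ l * compEff (T l) (T 0) (μ l) p₀ x := by linarith
    have h5 := mul_le_mul_of_nonneg_left h4 (show (0 : ℤ) ≤ m by positivity)
    have h6 : (m : ℤ) ^ l = m * (m : ℤ) ^ (l - 1) := by
      rw [← pow_succ', Nat.sub_add_cancel hl1]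
    have h7 : (0 : ℤ) ≤ K * (m : ℤ) ^ l := by positivity
    have h8 : (m : ℤ) * ((m : ℤ) ^ l - K₁ * (m : ℤ) ^ (l - 1)) =
        (m : ℤ) ^ (l + 1) - K₁ * (m : ℤ) ^ l := by
      rw [mul_sub, pow_succ']
      congr 1
      rw [h6]; ring
    push_cast
    linarith

/-- One pumping stage. The cycle of `exists_pump` is run with `m = n / c`, where `c` is so large
that the dips cost at most half of each counter. -/
theorem lower_step (H : Layers T₀ p₀ a k T e μ z R) (ha : ∀ x, 1 ≤ a x)
    (hak : ∀ x, a x ≤ k + 1) {l : ℕ} (hl : l ≤ k) (M : ℕ) :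
    ∃ M' N : ℕ, ∀ n ≥ N, ∀ v : X → ℤ, (∀ x, (n : ℤ) ^ fexp a e l x ≤ M * v x) →
      ∃ w, Run T₀ p₀ v w p₀ ∧ ∀ x, (n : ℤ) ^ fexp a e (l + 1) x ≤ M' * (v x + eff w x) := by
  obtain ⟨K, hK⟩ := exists_pump H ha hak hl
  have hf : ∀ x, 1 ≤ fexp a e l x := fun x => by
    have := H.le_e hak x; have := ha x; simp only [fexp]; omega
  let c : ℕ := 2 * M * K + 1
  refine ⟨2 * M + (2 * c) ^ (l + 1), c, fun n hn v hv => ?_⟩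
  have hc : 0 < c := by simp [c]
  let m : ℕ := n / c
  have hm : 1 ≤ m := (Nat.one_le_div_iff hc).2 hn
  have hm1 : c * m ≤ n := Nat.mul_div_le n c
  have hm2 : n ≤ 2 * c * m := by
    have := Nat.lt_mul_div_succ n hc
    change n < c * (m + 1) at this
    nlinarith
  have hM : ∀ x, (0 : ℤ) < M ∧ 0 < v x := by
    intro x
    have h1 : (0 : ℤ) < M * v x :=
      lt_of_lt_of_le (pow_pos (by exact_mod_cast (by omega : 0 < n)) _) (hv x)
    have h2 : (0 : ℤ) ≤ M := by positivity
    have h3 := pos_of_mul_pos_right h1 h2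
    exact ⟨pos_of_mul_pos_left h1 h3.le, h3⟩
  obtain ⟨W, hW1, hW2, hW3, hW4⟩ := hK m hm
  have hv2 : ∀ x, 2 * (K * (m : ℤ) ^ fexp a e l x) ≤ v x := by
    intro x
    have h1 : ((c * m : ℕ) : ℤ) ^ fexp a e l x ≤ M * v x :=
      le_trans (pow_le_pow_left₀ (by positivity) (by exact_mod_cast hm1) _) (hv x)
    have h2 : (c : ℤ) * (m : ℤ) ^ fexp a e l x ≤ ((c * m : ℕ) : ℤ) ^ fexp a e l x := by
      push_cast
      rw [mul_pow]
      gcongr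
      exact le_self_pow₀ (by exact_mod_cast hc) (by have := hf x; omega)
    have h3 : (2 * M * K : ℤ) * (m : ℤ) ^ fexp a e l x ≤ c * (m : ℤ) ^ fexp a e l x := by
      gcongr
      simp [c]
    refine le_of_mul_le_mul_left ?_ (hM x).1
    linarith
  have hKm : ∀ x, 0 ≤ K * (m : ℤ) ^ fexp a e l x := fun x => by positivity
  refine ⟨W, ⟨hW2, hW1, fun w' hw' x => ?_⟩, fun x => ?_⟩
  · linarith [hW3 w' hw' x, hv2 x, hKm x]
  · have hend := hW3 W List.prefix_rfl x
    have hend0 : 0 ≤ v x + eff W x := by linarith [hv2 x, hKm x]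
    push_cast
    by_cases hx : a x ≤ l ∧ l < e x
    · have hfl : fexp a e l x = l := by simp only [fexp]; omega
      have hfl' : fexp a e (l + 1) x = l + 1 := by simp only [fexp]; omega
      have h1 := hW4 x hx.1 hx.2
      have h2 := hv2 x
      have h0 := hKm x
      rw [hfl] at h2 h0
      have h3 : (m : ℤ) ^ (l + 1) ≤ v x + eff W x := by linarith
      rw [hfl']
      calc (n : ℤ) ^ (l + 1) ≤ ((2 * c * m : ℕ) : ℤ) ^ (l + 1) :=
            pow_le_pow_left₀ (by positivity) (by exact_mod_cast hm2) _
        _ = (2 * c) ^ (l + 1) * (m : ℤ) ^ (l + 1) := by push_cast; rw [mul_pow]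
        _ ≤ (2 * c) ^ (l + 1) * (v x + eff W x) := by gcongr
        _ ≤ _ := by
          have : (0 : ℤ) ≤ 2 * M * (v x + eff W x) := by positivity
          linarith
    · have hfl' : fexp a e (l + 1) x = fexp a e l x := by
        have := H.le_e hak x
        simp only [fexp]; omega
      rw [hfl']
      have h1 : (M : ℤ) * v x ≤ M * (2 * (v x + eff W x)) := by
        gcongr
        linarith [hv2 x, hKm x]
      have h2 : (0 : ℤ) ≤ (2 * c) ^ (l + 1) * (v x + eff W x) := by positivity
      linarith [hv x]

/-- Lower bound inside a strongly connected component, matching `upper_stage`: a single run makes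
all counters simultaneously as large as `Ω(n ^ e x)` and returns to its initial state. -/
theorem lower_scc (H : Layers T₀ p₀ a k T e μ z R) (ha : ∀ x, 1 ≤ a x)
    (hak : ∀ x, a x ≤ k + 1) (M : ℕ) :
    ∃ M' N : ℕ, ∀ n ≥ N, ∀ v : X → ℤ, (∀ x, (n : ℤ) ^ a x ≤ M * v x) →
      ∃ w, Run T₀ p₀ v w p₀ ∧ ∀ x, (n : ℤ) ^ e x ≤ M' * (v x + eff w x) := by
  have key : ∀ l ≤ k + 1, ∃ M' N : ℕ, ∀ n ≥ N, ∀ v : X → ℤ, (∀ x, (n : ℤ) ^ a x ≤ M * v x) →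
      ∃ w, Run T₀ p₀ v w p₀ ∧ ∀ x, (n : ℤ) ^ fexp a e l x ≤ M' * (v x + eff w x) := by
    intro l
    induction l with
    | zero =>
      intro _
      refine ⟨M, 1, fun n hn v hv => ⟨[], ⟨by simp, rfl, fun w' hw' x => ?_⟩, fun x => ?_⟩⟩
      · have h1 : (0 : ℤ) < M * v x :=
          lt_of_lt_of_le (pow_pos (by exact_mod_cast (by omega : 0 < n)) _) (hv x)
        have h2 : (0 : ℤ) ≤ M := by positivity
        rw [List.prefix_nil] at hw'
        subst hw'
        simpa using (pos_of_mul_pos_right h1 h2).le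
      · have : fexp a e 0 x = a x := by
          have := H.le_e hak x
          simp only [fexp]; omega
        rw [this]
        simpa using hv x
    | succ l ih =>
      intro hl
      obtain ⟨M₁, N₁, h₁⟩ := ih (by omega)
      obtain ⟨M₂, N₂, h₂⟩ := lower_step H ha hak (l := l) (by omega) M₁
      refine ⟨M₂, max N₁ N₂, fun n hn v hv => ?_⟩
      obtain ⟨w₁, hr₁, hw₁⟩ := h₁ n (le_of_max_le_left hn) v hv
      obtain ⟨w₂, hr₂, hw₂⟩ := h₂ n (le_of_max_le_right hn) _ hw₁
      refine ⟨w₁ ++ w₂, hr₁.append hr₂, fun x => ?_⟩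
      rw [eff_append, ← add_assoc]
      exact hw₂ x
  obtain ⟨M', N, h⟩ := key (k + 1) le_rfl
  refine ⟨M', N, fun n hn v hv => ?_⟩
  obtain ⟨w, hr, hw⟩ := h n hn v hv
  refine ⟨w, hr, fun x => ?_⟩
  have : fexp a e (k + 1) x = e x := by
    rcases H.e_cases x with h | h <;> simp only [fexp] <;> omega
  rw [← this]
  exact hw x

end LowerSection

/-! ### The dichotomy along strongly connected components -/

section DichotomySection

variable {Q X : Type}

/-- `q` is reachable from `p` in the underlying graph. -/
def Reach (T : Finset (Tr Q X)) (p q : Q) : Prop := ∃ w, IsWalk p w q ∧ ∀ t ∈ w, t ∈ T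

theorem Reach.refl (T : Finset (Tr Q X)) (p : Q) : Reach T p p := ⟨[], rfl, by simp⟩

theorem Reach.trans {T : Finset (Tr Q X)} {p q r : Q} (h : Reach T p q) (h' : Reach T q r) :
    Reach T p r := by
  obtain ⟨w, h1, h2⟩ := h
  obtain ⟨w', h1', h2'⟩ := h'
  exact ⟨w ++ w', h1.append h1', fun t ht => (List.mem_append.1 ht).elim (h2 t) (h2' t)⟩

theorem Reach.of_mem {T : Finset (Tr Q X)} {t : Tr Q X} (h : t ∈ T) : Reach T t.1 t.2.2 :=
  ⟨[t], ⟨rfl, rfl⟩, by simpa using h⟩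

/-- `q` lies in the strongly connected component of `p`. -/
def InScc (T : Finset (Tr Q X)) (p q : Q) : Prop := Reach T p q ∧ Reach T q p

/-- The transitions inside the strongly connected component of `p`. -/
def scc (T : Finset (Tr Q X)) (p : Q) : Finset (Tr Q X) :=
  T.filter fun t => InScc T p t.1 ∧ InScc T p t.2.2

theorem mem_scc {T : Finset (Tr Q X)} {p : Q} {t : Tr Q X} :
    t ∈ scc T p ↔ t ∈ T ∧ InScc T p t.1 ∧ InScc T p t.2.2 := Finset.mem_filter

theorem scc_subset (T : Finset (Tr Q X)) (p : Q) : scc T p ⊆ T := Finset.filter_subset _ _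

theorem exists_walk_scc {T : Finset (Tr Q X)} {p r s : Q} (hr : InScc T p r) (hs : InScc T p s) :
    ∃ w, IsWalk r w s ∧ ∀ t ∈ w, t ∈ scc T p := by
  obtain ⟨w, h1, h2⟩ := hr.2.trans hs.1
  refine ⟨w, h1, fun t ht => ?_⟩
  obtain ⟨a, b, rfl⟩ := List.append_of_mem ht
  obtain ⟨r', ha, hb⟩ := isWalk_append.1 h1
  obtain ⟨rfl, hb⟩ := hb
  have htT := h2 t ht
  have h3 : Reach T p t.1 := hr.1.trans ⟨a, ha, fun t' ht' => h2 t' (by simp [ht'])⟩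
  have h4 : Reach T t.2.2 p := Reach.trans ⟨b, hb, fun t' ht' => h2 t' (by simp [ht'])⟩ hs.2
  have h5 := Reach.of_mem htT
  exact mem_scc.2 ⟨htT, ⟨h3, h5.trans h4⟩, ⟨h3.trans h5, h4⟩⟩

theorem Run.mono {T T' : Finset (Tr Q X)} (hT : T ⊆ T') {p q : Q} {v : X → ℤ}
    {w : List (Tr Q X)} (h : Run T p v w q) : Run T' p v w q :=
  ⟨fun t ht => hT (h.1 t ht), h.2⟩

theorem Run.left {T : Finset (Tr Q X)} {p q r : Q} {v : X → ℤ} {w w' : List (Tr Q X)}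
    (h : Run T p v (w ++ w') q) (hw : IsWalk p w r) : Run T p v w r :=
  ⟨fun t ht => h.1 t (by simp [ht]), hw,
    fun u hu => h.2.2 u (hu.trans (List.prefix_append _ _))⟩

theorem Run.right {T : Finset (Tr Q X)} {p q r : Q} {v : X → ℤ} {w w' : List (Tr Q X)}
    (h : Run T p v (w ++ w') q) (hw : IsWalk p w r) :
    Run T r (fun x => v x + eff w x) w' q := by
  refine ⟨fun t ht => h.1 t (by simp [ht]), ?_, fun u hu x => ?_⟩
  · obtain ⟨r', h1, h2⟩ := isWalk_append.1 h.2.1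
    rwa [hw.end_unique h1]
  · have := h.2.2 (w ++ u) ((List.prefix_append_right_inj w).2 hu) x
    rwa [eff_append, ← add_assoc] at this

/-- A walk starting in the component of `p` either stays there or has a first exit. -/
theorem scc_split {T : Finset (Tr Q X)} {p : Q} {w : List (Tr Q X)} (hw : ∀ t ∈ w, t ∈ T) :
    ∀ r s, InScc T p r → IsWalk r w s → (∀ t ∈ w, t ∈ scc T p) ∨
      ∃ w₁ t w₂, w = w₁ ++ t :: w₂ ∧ (∀ t' ∈ w₁, t' ∈ scc T p) ∧ IsWalk r w₁ t.1 ∧ t ∈ T ∧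
        InScc T p t.1 ∧ ¬ InScc T p t.2.2 := by
  induction w with
  | nil => intro r s _ _; left; simp
  | cons t w ih =>
    rintro r s hr ⟨rfl, h⟩
    have ht : t ∈ T := hw t (by simp)
    by_cases hx : InScc T p t.2.2
    · have htC : t ∈ scc T p := mem_scc.2 ⟨ht, hr, hx⟩
      rcases ih (fun t' ht' => hw t' (by simp [ht'])) _ _ hx h with h1 |
        ⟨w₁, t₁, w₂, rfl, h2, h3, h4, h5⟩
      · left
        intro t' ht'
        rcases List.mem_cons.1 ht' with rfl | ht'
        · exact htC
        · exact h1 t' ht'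
      · right
        refine ⟨t :: w₁, t₁, w₂, rfl, fun t' ht' => ?_, ⟨rfl, h3⟩, h4, h5⟩
        rcases List.mem_cons.1 ht' with rfl | ht'
        · exact htC
        · exact h2 t' ht'
    · right
      exact ⟨[], t, w, rfl, by simp, rfl, ht, hr, hx⟩

/-- From `p` and initial values in `O(n ^ a x)` (no bound where `a x > k`), the value of counter
`c` stays in `O(n ^ k)`. -/
def Up (T : Finset (Tr Q X)) (k : ℕ) (p : Q) (a : X → ℕ) (c : X) : Prop :=
  ∀ M : ℕ, ∃ K N : ℕ, ∀ n ≥ N, ∀ v w q, (∀ x, a x ≤ k → v x ≤ M * (n : ℤ) ^ a x) →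
    Run T p v w q → v c + eff w c ≤ K * (n : ℤ) ^ k

/-- From `p` and initial values in `Ω(n ^ a x)`, counter `c` can be pumped to `Ω(n ^ (k + 1))`. -/
def Low (T : Finset (Tr Q X)) (k : ℕ) (p : Q) (a : X → ℕ) (c : X) : Prop :=
  ∀ M : ℕ, ∃ K N : ℕ, ∀ n ≥ N, ∀ v : X → ℤ, (∀ x, (n : ℤ) ^ a x ≤ M * v x) →
    ∃ w q, Run T p v w q ∧ (n : ℤ) ^ (k + 1) ≤ K * (v c + eff w c)

variable [Fintype X]

/-- After pumping all counters to order `n ^ e x`, a fixed path to `r` costs only a constant, so a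
lower bound from `r` carries over to `p`. -/
theorem low_of_exit {T : Finset (Tr Q X)} {k : ℕ} {p : Q} {a e : X → ℕ} {c : X}
    (he : ∀ x, 1 ≤ e x)
    (hlow : ∀ M : ℕ, ∃ M' N : ℕ, ∀ n ≥ N, ∀ v : X → ℤ, (∀ x, (n : ℤ) ^ a x ≤ M * v x) →
      ∃ w, Run T p v w p ∧ ∀ x, (n : ℤ) ^ e x ≤ M' * (v x + eff w x))
    {r : Q} (hr : Reach T p r) (h : Low T k r e c) : Low T k p a c := by
  intro M
  obtain ⟨M', N, h1⟩ := hlow M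
  obtain ⟨u, hu1, hu2⟩ := hr
  obtain ⟨U, hU⟩ := exists_dip u
  obtain ⟨K, N', h2⟩ := h (2 * M')
  refine ⟨K, N + N' + 2 * M' * U + 1, fun n hn v hv => ?_⟩
  obtain ⟨w, hw1, hw2⟩ := h1 n (by omega) v hv
  have hnU : (2 * M' * U : ℤ) + 1 ≤ n := by
    have : 2 * M' * U + 1 ≤ n := by omega
    exact_mod_cast this
  have hb : ∀ x, (n : ℤ) ^ e x ≤ (2 * M' : ℕ) * (v x + eff w x - U) := by
    intro x
    have h3 : (n : ℤ) ≤ (n : ℤ) ^ e x :=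
      le_self_pow₀ (by have : (0 : ℤ) ≤ 2 * M' * U := by positivity
                       linarith) (by have := he x; omega)
    push_cast
    linarith [hw2 x]
  have hpos : ∀ x, 0 < v x + eff w x - U := by
    intro x
    have h3 : (0 : ℤ) < (n : ℤ) ^ e x := pow_pos (by
      have : (0 : ℤ) ≤ 2 * M' * U := by positivity
      linarith) _
    exact pos_of_mul_pos_right (lt_of_lt_of_le h3 (hb x)) (by positivity)
  have hr1 : Run T p (fun x => v x + eff w x) u r := by
    refine ⟨hu2, hu1, fun u' hu' x => ?_⟩
    linarith [hU u' hu' x, hpos x]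
  obtain ⟨w', q, hw3, hw4⟩ := h2 n (by omega) (fun x => v x + eff w x + eff u x) fun x => by
    refine (hb x).trans (mul_le_mul_of_nonneg_left ?_ (by positivity))
    linarith [hU u List.prefix_rfl x]
  refine ⟨w ++ (u ++ w'), q, hw1.append (hr1.append hw3), ?_⟩
  rw [eff_append, eff_append, ← add_assoc, ← add_assoc]
  exact hw4

/-- A run that leaves the component of `p` does so with counters in `O(n ^ e x)`, so upper bounds
from the finitely many exits carry over to `p`. -/
theorem up_of_exits {T : Finset (Tr Q X)} {k : ℕ} {p : Q} {a e : X → ℕ} {c : X} (hc : e c ≤ k)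
    (hup : ∀ M : ℕ, ∃ K : ℕ, ∀ n : ℕ, 1 ≤ n → ∀ v : X → ℤ,
      (∀ x, a x ≤ k → v x ≤ M * (n : ℤ) ^ a x) → ∀ w q, Run (scc T p) p v w q →
      ∀ x, e x ≤ k → v x + eff w x ≤ K * (n : ℤ) ^ e x)
    (h : ∀ t ∈ T, InScc T p t.1 → ¬ InScc T p t.2.2 → Up T k t.2.2 e c) : Up T k p a c := by
  intro M
  obtain ⟨K₁, hK₁⟩ := hup M
  let U : ℕ := ∑ t ∈ T, ∑ x, (t.2.1 x).natAbs
  have hU : ∀ t ∈ T, ∀ x, t.2.1 x ≤ U := by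
    intro t ht x
    have h1 : (t.2.1 x).natAbs ≤ U :=
      (Finset.single_le_sum (f := fun x => (t.2.1 x).natAbs) (fun _ _ => Nat.zero_le _)
        (Finset.mem_univ x)).trans
      (Finset.single_le_sum (f := fun t : Tr Q X => ∑ x, (t.2.1 x).natAbs)
        (fun _ _ => Nat.zero_le _) ht)
    omega
  have hex : ∀ t : Tr Q X, ∃ K N : ℕ, t ∈ T → InScc T p t.1 → ¬ InScc T p t.2.2 →
      ∀ n ≥ N, ∀ v w q, (∀ x, e x ≤ k → v x ≤ (K₁ + U : ℕ) * (n : ℤ) ^ e x) →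
      Run T t.2.2 v w q → v c + eff w c ≤ K * (n : ℤ) ^ k := by
    intro t
    by_cases ht : t ∈ T ∧ InScc T p t.1 ∧ ¬ InScc T p t.2.2
    · obtain ⟨K, N, hKN⟩ := h t ht.1 ht.2.1 ht.2.2 (K₁ + U)
      exact ⟨K, N, fun _ _ _ => hKN⟩
    · exact ⟨0, 0, fun h1 h2 h3 => absurd ⟨h1, h2, h3⟩ ht⟩
  choose κ ν hκ using hex
  refine ⟨K₁ + ∑ t ∈ T, κ t, 1 + ∑ t ∈ T, ν t, fun n hn v w q hv hrun => ?_⟩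
  have hn1 : 1 ≤ n := by omega
  have hn' : (1 : ℤ) ≤ n := by exact_mod_cast hn1
  have h0 : (0 : ℤ) ≤ K₁ * (n : ℤ) ^ k := by positivity
  have h0' : (0 : ℤ) ≤ (∑ t ∈ T, κ t : ℕ) * (n : ℤ) ^ k := by positivity
  rw [Nat.cast_add, add_mul]
  rcases scc_split hrun.1 _ _ ⟨Reach.refl T p, Reach.refl T p⟩ hrun.2.1 with h1 |
    ⟨w₁, t, w₂, rfl, h1, h2, h3, h4, h5⟩
  · have h2 := hK₁ n hn1 v hv w q ⟨h1, hrun.2⟩ c hc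
    have h3 : (K₁ : ℤ) * (n : ℤ) ^ e c ≤ K₁ * (n : ℤ) ^ k := by gcongr
    linarith
  · have hκ' : (κ t : ℤ) ≤ (∑ t ∈ T, κ t : ℕ) := by
      exact_mod_cast Finset.single_le_sum (f := κ) (fun _ _ => Nat.zero_le _) h3
    have hν' : ν t ≤ ∑ t ∈ T, ν t :=
      Finset.single_le_sum (f := ν) (fun _ _ => Nat.zero_le _) h3
    have hr1 : Run (scc T p) p v w₁ t.1 := ⟨h1, (hrun.left h2).2⟩
    rw [List.append_cons] at hrun
    have hr2 := hrun.right (h2.append (⟨rfl, rfl⟩ : IsWalk t.1 [t] t.2.2))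
    have h6 := hκ t h3 h4 h5 n (by omega) _ _ _ (fun x hx => by
      have h7 := hK₁ n hn1 v hv w₁ _ hr1 x hx
      have h8 := hU t h3 x
      have h9 : (U : ℤ) ≤ U * (n : ℤ) ^ e x :=
        le_mul_of_one_le_right (by positivity) (one_le_pow₀ hn')
      simp only [eff_append, eff_cons, eff_nil]
      push_cast
      linarith) hr2
    have h7 : (κ t : ℤ) * (n : ℤ) ^ k ≤ (∑ t ∈ T, κ t : ℕ) * (n : ℤ) ^ k := by gcongr
    rw [List.append_cons, eff_append]
    linarith

/-- The dichotomy for one initial state, by induction on the number of reachable states. Exponents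
above `k` are truncated to `k + 1` and treated as unbounded in `Up`. -/
theorem up_or_low [Fintype Q] (T : Finset (Tr Q X)) (k : ℕ) (c : X) (p : Q) (a : X → ℕ)
    (ha : ∀ x, 1 ≤ a x) (hak : ∀ x, a x ≤ k + 1) : Up T k p a c ∨ Low T k p a c := by
  induction hN : (Finset.univ.filter fun q => Reach T p q).card using Nat.strong_induction_on
    generalizing p a with
  | _ N ih =>
  have hsc : ∀ t ∈ scc T p, ∃ w, IsWalk t.2.2 w t.1 ∧ ∀ t' ∈ w, t' ∈ scc T p := fun t ht =>
    exists_walk_scc (mem_scc.1 ht).2.2 (mem_scc.1 ht).2.1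
  obtain ⟨S, e, μ, z, R, H⟩ := exists_layers (scc T p) p a ha hsc k
  have he : ∀ x, 1 ≤ e x := fun x => (ha x).trans (H.le_e hak x)
  have hek : ∀ x, e x ≤ k + 1 := fun x => by rcases H.e_cases x with h | h <;> omega
  have hlow : ∀ M : ℕ, ∃ M' N : ℕ, ∀ n ≥ N, ∀ v : X → ℤ, (∀ x, (n : ℤ) ^ a x ≤ M * v x) →
      ∃ w, Run T p v w p ∧ ∀ x, (n : ℤ) ^ e x ≤ M' * (v x + eff w x) := by
    intro M
    obtain ⟨M', N, h⟩ := lower_scc H ha hak M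
    refine ⟨M', N, fun n hn v hv => ?_⟩
    obtain ⟨w, hw, hw'⟩ := h n hn v hv
    exact ⟨w, hw.mono (scc_subset T p), hw'⟩
  by_cases hc : e c = k + 1
  · right
    intro M
    obtain ⟨M', N, h⟩ := hlow M
    refine ⟨M', N, fun n hn v hv => ?_⟩
    obtain ⟨w, hw, hw'⟩ := h n hn v hv
    exact ⟨w, p, hw, hc ▸ hw' c⟩
  by_cases hex : ∃ t ∈ T, InScc T p t.1 ∧ ¬ InScc T p t.2.2 ∧ Low T k t.2.2 e c
  · obtain ⟨t, ht, h1, -, h3⟩ := hex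
    exact Or.inr (low_of_exit he hlow (h1.1.trans (Reach.of_mem ht)) h3)
  · left
    refine up_of_exits (e := e) (by have := hek c; omega) ?_ fun t ht h1 h2 => ?_
    · intro M
      obtain ⟨K, hK⟩ := upper_stage H ha hak M k le_rfl
      exact ⟨K, fun n hn v hv w q h => (hK n hn v hv w q h).1⟩
    · -- fewer states are reachable after leaving the component
      have hpt := h1.1.trans (Reach.of_mem ht)
      have hlt : (Finset.univ.filter fun q => Reach T t.2.2 q).card < N := by
        rw [← hN]
        refine Finset.card_lt_card (Finset.ssubset_iff_of_subset ?_ |>.2 ⟨p, ?_, ?_⟩)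
        · intro q hq
          simp only [Finset.mem_filter, Finset.mem_univ, true_and] at hq ⊢
          exact hpt.trans hq
        · simpa using Reach.refl T p
        · simpa using fun h => h2 ⟨hpt, h⟩
      exact (ih _ hlt t.2.2 e he hek rfl).resolve_right fun h => hex ⟨t, ht, h1, h2, h⟩

end DichotomySection

/-! ### Plays of a demonic VASS as runs -/

section LinkSection

/-- The strategy that plays the transition proposed by `pref` whenever it is enabled, and an
arbitrary legal one otherwise. -/
def prefStrategy (V : VASS d) (own : V.Q → Prop)
    (pref : List V.Config → V.Config → V.Q × (Fin d → ℤ) × V.Q) : Strategy V own where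
  choose h c := if V.enabled c (pref h c) then pref h c
    else if h1 : ∃ t, V.enabled c t then h1.choose
    else if h2 : ∃ t ∈ V.Tran, t.1 = c.1 then h2.choose else pref h c
  choose_mem h c _ hex := by
    split_ifs with h0 h1
    · exact ⟨h0.1, h0.2.1⟩
    · exact ⟨h1.choose_spec.1, h1.choose_spec.2.1⟩
    · exact hex.choose_spec
  choose_enabled h c _ hex := by
    split_ifs with h0
    · exact h0
    · exact hex.choose_spec

theorem prefStrategy_choose {V : VASS d} {own : V.Q → Prop}
    {pref : List V.Config → V.Config → V.Q × (Fin d → ℤ) × V.Q} {h : List V.Config}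
    {c : V.Config} (hc : V.enabled c (pref h c)) :
    (prefStrategy V own pref).choose h c = pref h c := if_pos hc

/-- Every play prefix is a run. -/
theorem run_of_play {V : VASS d} (σ : AngelStrategy V) (π : DemonStrategy V) (p : V.Q)
    (v : Fin d → ℕ) (n : ℕ) : ∀ h c, playAux σ π (p, v) n = some (h, c) →
    ∃ w, w.length = n ∧ Run V.Tran p (fun i => (v i : ℤ)) w c.1 ∧
      ∀ i, (c.2 i : ℤ) = v i + eff w i := by
  induction n with
  | zero =>
    intro h c hc
    simp only [playAux, Option.some.injEq, Prod.mk.injEq] at hc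
    obtain ⟨-, rfl⟩ := hc
    refine ⟨[], rfl, ⟨by simp, rfl, fun w' hw' x => ?_⟩, by simp⟩
    rw [List.prefix_nil] at hw'
    subst hw'
    simp
  | succ n ih =>
    intro h c hc
    rw [playAux, Option.bind_eq_some_iff] at hc
    obtain ⟨⟨h', c'⟩, h1, h2⟩ := hc
    obtain ⟨w, hw1, hw2, hw3⟩ := ih h' c' h1
    dsimp only at h2
    generalize (if V.angelic c'.1 then σ.choose h' c' else π.choose h' c') = t at h2
    split_ifs at h2 with hen
    simp only [Option.some.injEq, Prod.mk.injEq] at h2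
    obtain ⟨-, rfl⟩ := h2
    obtain ⟨e1, e2, e3⟩ := hen
    refine ⟨w ++ [t], by simp [hw1], hw2.append ⟨by simpa using e1, ⟨e2, rfl⟩, ?_⟩, fun i => ?_⟩
    · intro w' hw' x
      rcases List.prefix_cons_iff.1 hw' with rfl | ⟨u, rfl, hu⟩
      · simpa using hw2.nonneg x
      · obtain rfl := List.prefix_nil.1 hu
        have := e3 x
        rw [hw3] at this
        simpa using this
    · have := e3 i
      simp only [VASS.applyT]
      rw [Int.toNat_of_nonneg this, hw3, eff_append]
      simp [add_assoc]

/-- In a demonic VASS, Demon can enforce any run. -/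
theorem play_of_run {V : VASS d} (hD : V.demonic) (σ : AngelStrategy V) {p q : V.Q}
    {v : Fin d → ℕ} {w : List (Tr V.Q (Fin d))} (hw : Run V.Tran p (fun i => (v i : ℤ)) w q) :
    ∃ (π : DemonStrategy V) (h : _) (c : _), playAux σ π (p, v) w.length = some (h, c) ∧
      ∀ i, (c.2 i : ℤ) = v i + eff w i := by
  let pref : List V.Config → V.Config → V.Q × (Fin d → ℤ) × V.Q := fun h c =>
    if hlt : h.length < w.length then w[h.length] else (c.1, 0, c.1)
  let π : DemonStrategy V := prefStrategy V _ pref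
  suffices key : ∀ w₁ w₂, w = w₁ ++ w₂ → ∃ h c, playAux σ π (p, v) w₁.length = some (h, c) ∧
      h.length = w₁.length ∧ IsWalk p w₁ c.1 ∧ ∀ i, (c.2 i : ℤ) = v i + eff w₁ i by
    obtain ⟨h, c, h1, -, -, h2⟩ := key w [] (by simp)
    exact ⟨π, h, c, h1, h2⟩
  intro w₁
  induction w₁ using List.reverseRecOn with
  | nil => intro w₂ _; exact ⟨[], (p, v), rfl, rfl, rfl, by simp⟩
  | append_singleton w₁ t ih =>
    intro w₂ hw₂
    rw [List.append_assoc] at hw₂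
    obtain ⟨h, c, h1, h2, h3, h4⟩ := ih _ hw₂
    have hpref : pref h c = t := by
      simp only [pref, hw₂, h2]
      simp
    have hr := hw.2.1
    rw [hw₂] at hr
    obtain ⟨r, hr1, hr2, -⟩ := isWalk_append.1 hr
    have hc1 : t.1 = c.1 := hr2.trans (hr1.end_unique h3)
    have hen : V.enabled c t := by
      refine ⟨hw.1 t (by rw [hw₂]; simp), hc1, fun i => ?_⟩
      have := hw.2.2 (w₁ ++ [t]) ⟨w₂, by rw [hw₂]; simp⟩ i
      rw [eff_append] at this
      rw [h4]
      simpa [add_assoc] using this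
    have hπ : π.choose h c = t := by
      have := prefStrategy_choose (own := fun q => ¬ V.angelic q) (hpref.symm ▸ hen :
        V.enabled c (pref h c))
      exact this.trans hpref
    refine ⟨h ++ [c], V.applyT c t, ?_, by simp [h2], ?_, fun i => ?_⟩
    · rw [List.length_append, List.length_singleton, playAux, h1]
      simp [hD c.1, hπ, hen]
    · exact h3.append ⟨hc1, rfl⟩
    · have := hen.2.2 i
      simp only [VASS.applyT]
      rw [Int.toNat_of_nonneg this, h4, eff_append]
      simp [add_assoc]

theorem Cval_le {V : VASS d} {p : V.Q} {v : Fin d → ℕ} {i : Fin d} {B : ℕ}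
    (h : ∀ w q, Run V.Tran p (fun i => (v i : ℤ)) w q → v i + eff w i ≤ (B : ℤ)) :
    Cval V i (p, v) ≤ B := by
  let σ : AngelStrategy V := prefStrategy V _ fun _ c => (c.1, 0, c.1)
  refine (iInf_le _ σ).trans (iSup_le fun π => iSup₂_le ?_)
  rintro c ⟨n, hh, hc⟩
  obtain ⟨w, -, hw, hw'⟩ := run_of_play σ π p v n hh c hc
  have := h w _ hw
  rw [← hw'] at this
  exact_mod_cast this

theorem le_Cval {V : VASS d} (hD : V.demonic) {p q : V.Q} {v : Fin d → ℕ} (i : Fin d)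
    {w : List (Tr V.Q (Fin d))} (hw : Run V.Tran p (fun i => (v i : ℤ)) w q) :
    ((v i + eff w i).toNat : ℕ∞) ≤ Cval V i (p, v) := by
  refine le_iInf fun σ => ?_
  obtain ⟨π, h, c, h1, h2⟩ := play_of_run hD σ hw
  refine le_iSup_of_le π (le_iSup₂_of_le c ⟨_, h, h1⟩ ?_)
  rw [← h2]
  simp

theorem Tval_le {V : VASS d} {p : V.Q} {v : Fin d → ℕ} {B : ℕ}
    (h : ∀ w q, Run V.Tran p (fun i => (v i : ℤ)) w q → w.length + 1 ≤ B) :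
    Tval V (p, v) ≤ B := by
  let σ : AngelStrategy V := prefStrategy V _ fun _ c => (c.1, 0, c.1)
  refine (iInf_le _ σ).trans (iSup_le fun π => iSup₂_le ?_)
  rintro n hn
  obtain ⟨⟨hh, c⟩, hc⟩ := Option.isSome_iff_exists.1 hn
  obtain ⟨w, hl, hw, -⟩ := run_of_play σ π p v n hh c hc
  have := h w _ hw
  rw [hl] at this
  exact_mod_cast this

theorem le_Tval {V : VASS d} (hD : V.demonic) {p q : V.Q} {v : Fin d → ℕ}
    {w : List (Tr V.Q (Fin d))} (hw : Run V.Tran p (fun i => (v i : ℤ)) w q) :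
    ((w.length : ℕ) : ℕ∞) ≤ Tval V (p, v) := by
  refine le_iInf fun σ => ?_
  obtain ⟨π, h, c, h1, h2⟩ := play_of_run hD σ hw
  refine le_iSup_of_le π (le_iSup₂_of_le w.length ?_ ?_)
  · simp [h1]
  · exact le_self_add

/-- Adds a step counter, indexed by `none`. -/
def liftT {Q : Type} (t : Tr Q (Fin d)) : Tr Q (Option (Fin d)) :=
  (t.1, fun o => o.elim 1 t.2.1, t.2.2)

/-- Forgets the step counter. -/
def projT {Q : Type} (t : Tr Q (Option (Fin d))) : Tr Q (Fin d) :=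
  (t.1, fun i => t.2.1 (some i), t.2.2)

theorem isWalk_map {Q X Y : Type} (f : Tr Q X → Tr Q Y) (h1 : ∀ t, (f t).1 = t.1)
    (h2 : ∀ t, (f t).2.2 = t.2.2) {w : List (Tr Q X)} : ∀ {p q : Q}, IsWalk p w q →
    IsWalk p (w.map f) q := by
  induction w with
  | nil => exact id
  | cons t w ih => exact fun h => ⟨(h1 t).trans h.1, by rw [h2]; exact ih h.2⟩

theorem eff_map {Q X Y : Type} (f : Tr Q X → Tr Q Y) (x : X) (y : Y)
    (h : ∀ t, (f t).2.1 y = t.2.1 x) (w : List (Tr Q X)) : eff (w.map f) y = eff w x := by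
  induction w with
  | nil => rfl
  | cons t w ih => rw [List.map_cons, eff_cons, eff_cons, h, ih]

theorem eff_none {Q : Type} {w : List (Tr Q (Option (Fin d)))} (h : ∀ t ∈ w, t.2.1 none = 1) :
    eff w none = w.length := by
  induction w with
  | nil => rfl
  | cons t w ih =>
    rw [eff_cons, ih fun t' ht' => h t' (by simp [ht']), h t (by simp)]
    simp [add_comm]

theorem run_lift {V : VASS d} {p q : V.Q} {n : ℕ} {w : List (Tr V.Q (Fin d))}
    (hw : Run V.Tran p (fun _ => (n : ℤ)) w q) :
    Run (V.Tran.image liftT) p (fun _ => (n : ℤ)) (w.map liftT) q := by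
  refine ⟨fun t ht => ?_, isWalk_map liftT (fun _ => rfl) (fun _ => rfl) hw.2.1,
    fun u hu x => ?_⟩
  · obtain ⟨t, ht, rfl⟩ := List.mem_map.1 ht
    exact Finset.mem_image_of_mem _ (hw.1 t (by assumption))
  · obtain ⟨u', hu', rfl⟩ := List.prefix_map_iff.1 hu
    cases x with
    | none =>
      rw [eff_none fun t ht => by obtain ⟨t, -, rfl⟩ := List.mem_map.1 ht; rfl]
      positivity
    | some i =>
      rw [eff_map liftT i (some i) fun _ => rfl]
      exact hw.2.2 u' hu' i

theorem run_proj {V : VASS d} {p q : V.Q} {n : ℕ} {w : List (Tr V.Q (Option (Fin d)))}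
    (hw : Run (V.Tran.image liftT) p (fun _ => (n : ℤ)) w q) :
    Run V.Tran p (fun _ => (n : ℤ)) (w.map projT) q ∧ eff w none = w.length := by
  refine ⟨⟨fun t ht => ?_, isWalk_map projT (fun _ => rfl) (fun _ => rfl) hw.2.1,
    fun u hu i => ?_⟩, eff_none fun t ht => ?_⟩
  · obtain ⟨t, ht', rfl⟩ := List.mem_map.1 ht
    obtain ⟨t₀, ht₀, rfl⟩ := Finset.mem_image.1 (hw.1 t ht')
    exact ht₀
  · obtain ⟨u', hu', rfl⟩ := List.prefix_map_iff.1 hu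
    rw [eff_map projT (some i) i fun _ => rfl]
    exact hw.2.2 u' hu' (some i)
  · obtain ⟨t₀, -, rfl⟩ := Finset.mem_image.1 (hw.1 t ht)
    rfl

theorem counter_dichotomy (k : ℕ) (V : VASS d) (hD : V.demonic) (c : Fin d) :
    BigO (Ccomp V c) (fun n => n ^ k) ∨ BigOmega (Ccomp V c) (fun n => n ^ (k + 1)) := by
  have hdich := fun p : V.Q => up_or_low (X := Fin d) V.Tran k c p (fun _ => 1)
    (fun _ => le_rfl) (fun _ => by omega)
  by_cases hlow : ∃ p, Low (X := Fin d) V.Tran k p (fun _ => 1) c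
  · right
    obtain ⟨p, hp⟩ := hlow
    obtain ⟨K, N, h⟩ := hp 1
    refine ⟨K + 1, N, Nat.succ_pos K, fun n hn => ?_⟩
    obtain ⟨w, q, hw, hb⟩ := h n hn (fun _ => n) fun _ => by simp
    have h1 := le_Cval hD (v := fun _ => n) c hw
    have h2 : Cval V c (p, fun _ => n) ≤ Ccomp V c n :=
      le_iSup (fun p : V.Q => Cval V c (p, fun _ => n)) p
    have h3 : n ^ (k + 1) ≤ (K + 1) * ((n : ℤ) + eff w c).toNat := by
      have h4 := hw.nonneg c
      zify
      rw [Int.toNat_of_nonneg h4]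
      linarith
    calc ((n ^ (k + 1) : ℕ) : ℕ∞) ≤ (((K + 1) * ((n : ℤ) + eff w c).toNat : ℕ) : ℕ∞) := by
          exact_mod_cast h3
      _ = ((K + 1 : ℕ) : ℕ∞) * ((((n : ℤ) + eff w c).toNat : ℕ) : ℕ∞) := Nat.cast_mul _ _
      _ ≤ _ := by gcongr; exact h1.trans h2
  · left
    have hup := fun p => (hdich p).resolve_right fun h => hlow ⟨p, h⟩
    choose K N h using fun p => hup p 1
    refine ⟨∑ p, K p, ∑ p, N p, fun n hn => iSup_le fun p => Cval_le fun w q hw => ?_⟩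
    have h1 : K p ≤ ∑ p, K p :=
      Finset.single_le_sum (f := K) (fun _ _ => Nat.zero_le _) (Finset.mem_univ p)
    have h2 : N p ≤ ∑ p, N p :=
      Finset.single_le_sum (f := N) (fun _ _ => Nat.zero_le _) (Finset.mem_univ p)
    refine (h p n (h2.trans hn) (fun _ => n) w q (fun _ _ => by simp) hw).trans ?_
    exact_mod_cast Nat.mul_le_mul_right (n ^ k) h1

/-- The length of a run is the effect on the step counter `none`. That counter starts at `n`, which
is negligible against `n ^ (k + 1)` because `k ≥ 1`. -/
theorem termination_dichotomy (k : ℕ) (hk : 1 ≤ k) (V : VASS d) (hD : V.demonic) :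
    BigO (Lcomp V) (fun n => n ^ k) ∨ BigOmega (Lcomp V) (fun n => n ^ (k + 1)) := by
  have hdich := fun p : V.Q => up_or_low (X := Option (Fin d)) (V.Tran.image liftT) k none p
    (fun _ => 1) (fun _ => le_rfl) (fun _ => by omega)
  by_cases hlow : ∃ p, Low (X := Option (Fin d)) (V.Tran.image liftT) k p (fun _ => 1) none
  · right
    obtain ⟨p, hp⟩ := hlow
    obtain ⟨K, N, h⟩ := hp 1
    refine ⟨2 * K + 1, N + 2 * K + 1, Nat.succ_pos _, fun n hn => ?_⟩
    obtain ⟨w, q, hw, hb⟩ := h n (by omega) (fun _ => n) fun _ => by simp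
    obtain ⟨hw', hlen⟩ := run_proj hw
    have h1 := le_Tval hD (v := fun _ => n) hw'
    rw [List.length_map] at h1
    have h2 : Tval V (p, fun _ => n) ≤ Lcomp V n :=
      le_iSup (fun p : V.Q => Tval V (p, fun _ => n)) p
    have h3 : n ^ (k + 1) ≤ (2 * K + 1) * w.length := by
      rw [hlen] at hb
      have hb' : n ^ (k + 1) ≤ K * (n + w.length) := by exact_mod_cast hb
      -- `2 K n ≤ n ^ 2 ≤ n ^ (k + 1)`
      have h4 : n ^ 2 ≤ n ^ (k + 1) := Nat.pow_le_pow_right (by omega) (by omega)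
      have h5 : 2 * K * n ≤ n ^ 2 := by rw [pow_two]; exact Nat.mul_le_mul_right n (by omega)
      nlinarith
    calc ((n ^ (k + 1) : ℕ) : ℕ∞) ≤ (((2 * K + 1) * w.length : ℕ) : ℕ∞) := by
          exact_mod_cast h3
      _ = ((2 * K + 1 : ℕ) : ℕ∞) * ((w.length : ℕ) : ℕ∞) := Nat.cast_mul _ _
      _ ≤ _ := by gcongr; exact h1.trans h2
  · left
    have hup := fun p => (hdich p).resolve_right fun h => hlow ⟨p, h⟩
    choose K N h using fun p => hup p 1
    refine ⟨∑ p, K p, 1 + ∑ p, N p, fun n hn => iSup_le fun p => Tval_le fun w q hw => ?_⟩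
    have h1 : K p ≤ ∑ p, K p :=
      Finset.single_le_sum (f := K) (fun _ _ => Nat.zero_le _) (Finset.mem_univ p)
    have h2 : N p ≤ ∑ p, N p :=
      Finset.single_le_sum (f := N) (fun _ _ => Nat.zero_le _) (Finset.mem_univ p)
    have h3 := h p n (by omega) (fun _ => n) _ q (fun _ _ => by simp) (run_lift hw)
    rw [(run_proj (run_lift hw)).2, List.length_map] at h3
    have h4 : n + w.length ≤ K p * n ^ k := by exact_mod_cast h3
    have h5 := Nat.mul_le_mul_right (n ^ k) h1
    simp only
    omega

end LinkSection

/-- Let `k ≥ 1`. For every demonic VASS `A` and every counter `c` of `A`,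
the termination complexity `L` of `A` is either in `O(n^k)` or in `Ω(n^{k+1})`, and the
counter complexity `C[c]` of `A` is either in `O(n^k)` or in `Ω(n^{k+1})`. -/
theorem demonic_polynomial_dichotomy {d : ℕ} (k : ℕ) (hk : 1 ≤ k)
    (V : VASS d) (hT : V.total) (hD : V.demonic) :
    (BigO (Lcomp V) (fun n => n ^ k) ∨ BigOmega (Lcomp V) (fun n => n ^ (k + 1))) ∧
    ∀ c : Fin d,
      BigO (Ccomp V c) (fun n => n ^ k) ∨ BigOmega (Ccomp V c) (fun n => n ^ (k + 1)) := by
  exact ⟨termination_dichotomy k hk V hD, fun c => counter_dichotomy k V hD c⟩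

end
end VassPaper
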